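/- Let α ∈ 𝒦 and let γ, δ ∈ ℝ. Then there exists a set 𝒢 = 𝒢(α,γ,δ) ⊆ Bad of Hausdorff dimension dim_H(𝒢) = 1 such that for every β ∈ 𝒢 there exist a constant c > 0 and a threshold N₀ such that for all integers N ≥ N₀ one has #{n ∈ {1,…,N} : n·‖nα − γ‖·‖nβ − δ‖ ≤ 1/log n} ≥ c·log log N. -/

import Mathlib

open Filter MeasureTheory Real

/-- Distance from `x` to the nearest integer, `‖x‖ = min {|x - k| : k ∈ ℤ}`. -/
noncomputable def dni (x : ℝ) : ℝ := |x - round x|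

/-- The set of badly approximable numbers. -/
noncomputable def Bad : Set ℝ :=
  {α : ℝ | 0 < Filter.atTop.liminf (fun n : ℕ => (n : ℝ) * dni (n * α))}

/-- The `t`-th continued fraction convergent denominator `q_t(α)` of `α`. -/
noncomputable def qden (α : ℝ) (t : ℕ) : ℝ := (GenContFract.of α).dens t

/-- The set `𝒦` of irrationals whose convergent denominators grow at most exponentially. -/
noncomputable def KSet : Set ℝ :=
  {α : ℝ | Irrational α ∧ ∃ C : ℝ, ∀ t : ℕ, 1 ≤ t → Real.log (qden α t) / t ≤ C}

/-!
The set `𝒢` is made of limit points of words in a finite family of Möbius maps built from Farey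
neighbours `p / q` with `K < q ≤ 2 K`. There are about `K ^ 2` coprime pairs while the maps contract
by about `K ^ (-2)`, so their limit sets have dimension close to `1`; along such a word the
denominators grow by bounded factors, so its limit point is badly approximable.

Since `α ∈ 𝒦`, every `k` admits an integer `n` of size `exp (O (2 ^ k))`, at least `2 ^ 2 ^ k`, with
`n * ‖nα - γ‖ ≤ 5`. When the word constructed so far has denominator about `√n`, up to a power of
`log n`, the functions `x ↦ n * (g w) x`, for distinct continuations `w` of length `≈ log log n`,
have differences with oscillating exponential integrals. A second moment argument then yields
a continuation `w` forcing `‖nβ - δ‖ ≤ 1 / (5 * log n)`. These forced words are so sparse that the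
limit points still map onto a full digit expansion by a Hölder map of exponent close to `1`, which
preserves the dimension in the limit, and the doubly exponential growth of the integers `n` used
gives `c * log log N` solutions up to `N`.
-/

open Set
open scoped Matrix unitInterval

/-! ### Möbius maps of natural matrices -/

/-- The Möbius action `x ↦ (a x + b) / (c x + d)` of a `2 × 2` matrix with natural entries. -/
noncomputable def moebius (g : Matrix (Fin 2) (Fin 2) ℕ) (x : ℝ) : ℝ :=
  (g 0 0 * x + g 0 1) / (g 1 0 * x + g 1 1)

/-- The quotient `c / d` of the bottom row; it governs the distortion of `moebius g`. -/
noncomputable def bottomRatio (g : Matrix (Fin 2) (Fin 2) ℕ) : ℝ := g 1 0 / g 1 1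

/-- Determinant one (written without subtraction) and bottom row increasing, so that the
denominator `c x + d` lies between `d` and `2 d` on the unit interval. -/
structure IsAdmissible (g : Matrix (Fin 2) (Fin 2) ℕ) : Prop where
  det_eq : g 0 0 * g 1 1 = g 0 1 * g 1 0 + 1
  bottom_le : g 1 0 ≤ g 1 1

/-- Determinant one and all rows and columns increasing. This condition is stable under
transposition, and right multiplication by such a matrix preserves admissibility. -/
structure IsGenerator (g : Matrix (Fin 2) (Fin 2) ℕ) : Prop extends IsAdmissible g where
  top_le : g 0 0 ≤ g 0 1
  left_le : g 0 0 ≤ g 1 0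
  right_le : g 0 1 ≤ g 1 1

section Moebius

variable {g h : Matrix (Fin 2) (Fin 2) ℕ} {x y : ℝ}

theorem moebius_one : moebius 1 x = x := by simp [moebius]

theorem moebius_nonneg (g : Matrix (Fin 2) (Fin 2) ℕ) (hx : 0 ≤ x) : 0 ≤ moebius g x := by
  unfold moebius; positivity

namespace IsAdmissible

theorem one : IsAdmissible 1 := ⟨by simp, by simp⟩

theorem den_pos (hg : IsAdmissible g) : 0 < g 1 1 := by
  refine Nat.pos_of_ne_zero fun h0 ↦ ?_
  have := hg.det_eq
  simp [h0] at this

theorem one_le_den (hg : IsAdmissible g) : (1 : ℝ) ≤ g 1 1 := by exact_mod_cast hg.den_pos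

theorem det_eq_real (hg : IsAdmissible g) : (g 0 0 : ℝ) * g 1 1 = g 0 1 * g 1 0 + 1 := by
  exact_mod_cast hg.det_eq

theorem den_le_linear (hx : 0 ≤ x) : (g 1 1 : ℝ) ≤ g 1 0 * x + g 1 1 :=
  le_add_of_nonneg_left (by positivity)

theorem linear_pos (hg : IsAdmissible g) (hx : 0 ≤ x) : 0 < (g 1 0 : ℝ) * x + g 1 1 := by
  linarith [hg.one_le_den, den_le_linear (g := g) hx]

theorem linear_le (hg : IsAdmissible g) (hx : x ∈ I) : (g 1 0 : ℝ) * x + g 1 1 ≤ 2 * g 1 1 := by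
  have h : (g 1 0 : ℝ) ≤ g 1 1 := by exact_mod_cast hg.bottom_le
  nlinarith [hx.1, hx.2, (g 1 0).cast_nonneg (α := ℝ)]

theorem mul (hg : IsAdmissible g) (hh : IsGenerator h) : IsAdmissible (g * h) := by
  constructor
  · have hdet_g := hg.det_eq
    have hdet_h := hh.det_eq
    simp only [Matrix.mul_apply, Fin.sum_univ_two]
    zify at *
    linear_combination (h 0 0 * h 1 1 - h 0 1 * h 1 0 : ℤ) * hdet_g + hdet_h
  · simp only [Matrix.mul_apply, Fin.sum_univ_two]
    gcongr
    exacts [hh.top_le, hh.bottom_le]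

theorem moebius_sub (hg : IsAdmissible g) (hx : 0 ≤ x) (hy : 0 ≤ y) :
    moebius g x - moebius g y = (x - y) / ((g 1 0 * x + g 1 1) * (g 1 0 * y + g 1 1)) := by
  rw [moebius, moebius, div_sub_div _ _ (hg.linear_pos hx).ne' (hg.linear_pos hy).ne']
  congr 1
  linear_combination (x - y) * hg.det_eq_real

theorem moebius_mul (hg : IsAdmissible g) (hh : IsAdmissible h) (hx : 0 ≤ x) :
    moebius (g * h) x = moebius g (moebius h x) := by
  have hden := hh.linear_pos hx
  have hden' := hg.linear_pos (moebius_nonneg h hx)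
  unfold moebius at hden' ⊢
  simp only [Matrix.mul_apply, Fin.sum_univ_two]
  push_cast
  rw [div_eq_div_iff _ hden'.ne']
  · field_simp
    ring
  · convert (mul_pos hden hden').ne' using 1
    field_simp
    ring

theorem continuousOn_moebius (hg : IsAdmissible g) : ContinuousOn (moebius g) I :=
  ContinuousOn.div (by fun_prop) (by fun_prop) fun _ hx ↦ (hg.linear_pos hx.1).ne'

theorem div_sq_le_abs_moebius_sub (hg : IsAdmissible g) (hx : x ∈ I) (hy : y ∈ I) :
    |x - y| / (2 * g 1 1) ^ 2 ≤ |moebius g x - moebius g y| := by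
  have hx' := hg.linear_pos hx.1
  have hy' := hg.linear_pos hy.1
  rw [hg.moebius_sub hx.1 hy.1, abs_div, abs_of_pos (mul_pos hx' hy'), sq]
  gcongr
  exacts [hg.linear_le hx, hg.linear_le hy]

theorem abs_moebius_sub_le (hg : IsAdmissible g) (hx : x ∈ I) (hy : y ∈ I) :
    |moebius g x - moebius g y| ≤ 1 / (g 1 1 : ℝ) ^ 2 := by
  have hden := hg.one_le_den
  have hx' := hg.linear_pos hx.1
  rw [hg.moebius_sub hx.1 hy.1, abs_div, abs_of_pos (mul_pos hx' (hg.linear_pos hy.1)), sq]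
  gcongr
  exacts [abs_le.2 ⟨by linarith [hx.1, hy.2], by linarith [hx.2, hy.1]⟩,
    den_le_linear hx.1, den_le_linear hy.1]

theorem bottomRatio_mem (hg : IsAdmissible g) : bottomRatio g ∈ I :=
  ⟨by unfold bottomRatio; positivity,
    div_le_one_of_le₀ (by exact_mod_cast hg.bottom_le) (by positivity)⟩

theorem bottomRatio_mul (hg : IsAdmissible g) (h : Matrix (Fin 2) (Fin 2) ℕ) :
    bottomRatio (g * h) = moebius hᵀ (bottomRatio g) := by
  have hden : (g 1 1 : ℝ) ≠ 0 := by exact_mod_cast hg.den_pos.ne'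
  simp only [bottomRatio, moebius, Matrix.transpose_apply, Matrix.mul_apply, Fin.sum_univ_two]
  push_cast
  rw [← mul_div_mul_right (_ + _) (_ + (h 1 1 : ℝ)) hden]
  congr 1 <;> field_simp

end IsAdmissible

namespace IsGenerator

theorem transpose (hg : IsGenerator g) : IsGenerator gᵀ where
  det_eq := by simp only [Matrix.transpose_apply, hg.det_eq, mul_comm]
  bottom_le := hg.right_le
  top_le := hg.left_le
  left_le := hg.top_le
  right_le := hg.bottom_le

theorem mapsTo_moebius (hg : IsGenerator g) : MapsTo (moebius g) I I := by
  refine fun x hx ↦ ⟨moebius_nonneg g hx.1, (div_le_one (hg.linear_pos hx.1)).2 ?_⟩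
  have := hx.1
  gcongr
  exacts [hg.left_le, hg.right_le]

end IsGenerator

end Moebius

/-! ### Möbius systems and their words -/

/-- A finite family of generator matrices whose Möbius maps, and those of the transposed
matrices, have images of the unit interval at mutual distance at least `gap`. Multiplying by a
generator multiplies the denominator `g 1 1` by a factor between `minDen` and `growth`. -/
structure MoebiusSystem where
  card : ℕ
  minDen : ℕ
  growth : ℕ
  gap : ℝ
  gen : Fin card → Matrix (Fin 2) (Fin 2) ℕ
  two_le_card : 2 ≤ card
  two_le_minDen : 2 ≤ minDen
  gap_pos : 0 < gap
  isGenerator : ∀ i, IsGenerator (gen i)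
  minDen_le : ∀ i, minDen ≤ gen i 1 1
  two_mul_den_le : ∀ i, 2 * gen i 1 1 ≤ growth
  gap_le : ∀ i j, i ≠ j → ∀ x ∈ I, ∀ y ∈ I, gap ≤ |moebius (gen i) x - moebius (gen j) y|
  gap_le_transpose : ∀ i j, i ≠ j → ∀ x ∈ I, ∀ y ∈ I,
    gap ≤ |moebius (gen i)ᵀ x - moebius (gen j)ᵀ y|

namespace MoebiusSystem

variable (S : MoebiusSystem)

/-- The matrix product spelled by a word in the generators. -/
def word (l : List (Fin S.card)) : Matrix (Fin 2) (Fin 2) ℕ := (l.map S.gen).prod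

/-- The system of the transposed generators. -/
def transpose : MoebiusSystem where
  __ := S
  gen i := (S.gen i)ᵀ
  isGenerator i := (S.isGenerator i).transpose
  gap_le := S.gap_le_transpose
  gap_le_transpose := S.gap_le

variable {S} {g : Matrix (Fin 2) (Fin 2) ℕ} {l l' : List (Fin S.card)} {x y : ℝ}

theorem word_nil : S.word [] = 1 := rfl

theorem word_cons (i : Fin S.card) (l : List (Fin S.card)) :
    S.word (i :: l) = S.gen i * S.word l := by
  simp [word]

theorem word_append (l l' : List (Fin S.card)) : S.word (l ++ l') = S.word l * S.word l' := by
  simp [word]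

theorem transpose_word (l : List (Fin S.card)) :
    (S.word l)ᵀ = S.transpose.word l.reverse := by
  rw [word, Matrix.transpose_list_prod, List.map_map, ← List.map_reverse]
  rfl

theorem four_le_growth (S : MoebiusSystem) : 4 ≤ S.growth := by
  have h₀ := S.two_le_minDen
  have h₁ := S.minDen_le ⟨0, by linarith [S.two_le_card]⟩
  have h₂ := S.two_mul_den_le ⟨0, by linarith [S.two_le_card]⟩
  lia

theorem one_le_growth (S : MoebiusSystem) : (1 : ℝ) ≤ S.growth := by
  exact_mod_cast (by linarith [S.four_le_growth] : 1 ≤ S.growth)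

theorem isAdmissible_mul_word (hg : IsAdmissible g) (l : List (Fin S.card)) :
    IsAdmissible (g * S.word l) := by
  induction l generalizing g with
  | nil => rwa [word_nil, mul_one]
  | cons i l ih => rw [word_cons, ← mul_assoc]; exact ih (hg.mul (S.isGenerator i))

theorem isAdmissible_word (l : List (Fin S.card)) : IsAdmissible (S.word l) := by
  simpa using isAdmissible_mul_word .one l

theorem moebius_mul_word (hg : IsAdmissible g) (l : List (Fin S.card)) (hx : 0 ≤ x) :
    moebius (g * S.word l) x = moebius g (moebius (S.word l) x) :=
  hg.moebius_mul (isAdmissible_word l) hx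

theorem mapsTo_moebius_word (l : List (Fin S.card)) : MapsTo (moebius (S.word l)) I I := by
  induction l with
  | nil => intro x hx; rwa [word_nil, moebius_one]
  | cons i l ih =>
    intro x hx
    rw [word_cons, moebius_mul_word (S.isGenerator i).toIsAdmissible l hx.1]
    exact (S.isGenerator i).mapsTo_moebius (ih hx)

theorem den_mul_gen_le (hg : IsAdmissible g) (i : Fin S.card) :
    (g * S.gen i) 1 1 ≤ S.growth * g 1 1 := by
  have h₁ := hg.bottom_le
  have h₂ := (S.isGenerator i).right_le
  have h₃ := S.two_mul_den_le i
  calc (g * S.gen i) 1 1 = g 1 0 * S.gen i 0 1 + g 1 1 * S.gen i 1 1 := by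
        rw [Matrix.mul_apply, Fin.sum_univ_two]
    _ ≤ g 1 1 * S.gen i 1 1 + g 1 1 * S.gen i 1 1 := by gcongr
    _ = 2 * S.gen i 1 1 * g 1 1 := by ring
    _ ≤ S.growth * g 1 1 := by gcongr

theorem le_den_mul_gen (g : Matrix (Fin 2) (Fin 2) ℕ) (i : Fin S.card) :
    S.minDen * g 1 1 ≤ (g * S.gen i) 1 1 := by
  rw [Matrix.mul_apply, Fin.sum_univ_two, mul_comm]
  exact le_add_left (Nat.mul_le_mul_left _ (S.minDen_le i))

theorem den_mul_word_le (hg : IsAdmissible g) (l : List (Fin S.card)) :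
    (g * S.word l) 1 1 ≤ S.growth ^ l.length * g 1 1 := by
  induction l generalizing g with
  | nil => simp [word_nil]
  | cons i l ih =>
    rw [word_cons, ← mul_assoc, List.length_cons, pow_succ, mul_assoc (_ ^ _)]
    exact (ih (hg.mul (S.isGenerator i))).trans (Nat.mul_le_mul_left _ (den_mul_gen_le hg i))

theorem le_den_mul_word (g : Matrix (Fin 2) (Fin 2) ℕ) (l : List (Fin S.card)) :
    S.minDen ^ l.length * g 1 1 ≤ (g * S.word l) 1 1 := by
  induction l generalizing g with
  | nil => simp [word_nil]
  | cons i l ih =>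
    rw [word_cons, ← mul_assoc, List.length_cons, pow_succ, mul_assoc (_ ^ _)]
    exact (Nat.mul_le_mul_left _ (le_den_mul_gen g i)).trans (ih _)

theorem den_le_den_mul_word (g : Matrix (Fin 2) (Fin 2) ℕ) (l : List (Fin S.card)) :
    g 1 1 ≤ (g * S.word l) 1 1 :=
  (Nat.le_mul_of_pos_left _ (pow_pos (by linarith [S.two_le_minDen]) _)).trans
    (le_den_mul_word g l)

theorem den_word_le (l : List (Fin S.card)) : S.word l 1 1 ≤ S.growth ^ l.length := by
  simpa using den_mul_word_le .one l

theorem le_den_word (l : List (Fin S.card)) : S.minDen ^ l.length ≤ S.word l 1 1 := by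
  simpa using le_den_mul_word 1 l

theorem div_growth_sq_le_abs_moebius_gen_sub (i : Fin S.card) (hx : x ∈ I) (hy : y ∈ I) :
    |x - y| / (S.growth : ℝ) ^ 2 ≤ |moebius (S.gen i) x - moebius (S.gen i) y| := by
  have hgen := (S.isGenerator i).toIsAdmissible
  have hden : (2 * S.gen i 1 1 : ℝ) ≤ S.growth := by exact_mod_cast S.two_mul_den_le i
  have hpos := hgen.one_le_den
  refine le_trans ?_ (hgen.div_sq_le_abs_moebius_sub hx hy)
  gcongr

theorem gap_div_le_abs_moebius_word_sub (hlen : l.length = l'.length) (hne : l ≠ l')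
    (hx : x ∈ I) (hy : y ∈ I) :
    S.gap / (S.growth : ℝ) ^ (2 * l.length) ≤
      |moebius (S.word l) x - moebius (S.word l') y| := by
  induction l generalizing l' with
  | nil => exact absurd (List.length_eq_zero_iff.1 hlen.symm).symm hne
  | cons i l ih =>
    obtain _ | ⟨j, l'⟩ := l'
    · simp at hlen
    simp only [word_cons, moebius_mul_word (S.isGenerator _).toIsAdmissible _ hx.1,
      moebius_mul_word (S.isGenerator _).toIsAdmissible _ hy.1]
    have hlx := mapsTo_moebius_word l hx
    have hly := mapsTo_moebius_word l' hy
    obtain rfl | hij := eq_or_ne i j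
    · refine le_trans ?_ (div_growth_sq_le_abs_moebius_gen_sub i hlx hly)
      rw [List.length_cons, mul_add_one, pow_add, ← div_div]
      gcongr
      exact ih (by simpa using hlen) (by simpa using hne)
    · exact (div_le_self S.gap_pos.le (one_le_pow₀ S.one_le_growth)).trans
        (S.gap_le i j hij _ hlx _ hly)

theorem gap_div_le_abs_bottomRatio_sub (hg : IsAdmissible g) (hlen : l.length = l'.length)
    (hne : l ≠ l') :
    S.gap / (S.growth : ℝ) ^ (2 * l.length) ≤
      |bottomRatio (g * S.word l) - bottomRatio (g * S.word l')| := by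
  rw [hg.bottomRatio_mul, hg.bottomRatio_mul, transpose_word, transpose_word, ← l.length_reverse]
  exact gap_div_le_abs_moebius_word_sub (S := S.transpose)
    (l.length_reverse.trans (hlen.trans l'.length_reverse.symm))
    (List.reverse_injective.ne hne) hg.bottomRatio_mem hg.bottomRatio_mem

end MoebiusSystem

open scoped FourierTransform

/-! ### Oscillatory integrals -/

section VanDerCorput

variable {F F' F'' : ℝ → ℝ} {a b c r μ M : ℝ}

theorem hasDerivAt_fourierChar_div {x : ℝ} (hF : HasDerivAt F (F' x) x)
    (hF' : HasDerivAt F' (F'' x) x) (hne : F' x ≠ 0) :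
    HasDerivAt (fun y ↦ (𝐞 (F y) : ℂ) / F' y)
      (2 * π * Complex.I * 𝐞 (F x) - 𝐞 (F x) * (F'' x / F' x ^ 2 : ℝ)) x := by
  have hne' : (F' x : ℂ) ≠ 0 := by exact_mod_cast hne
  refine (((hasDerivAt_fourierChar (F x)).scomp x hF).div hF'.ofReal_comp hne').congr_deriv ?_
  simp only [Function.comp_apply, Complex.real_smul]
  push_cast
  field_simp

theorem continuousOn_fourierChar_comp {s : Set ℝ} (hF : ∀ x ∈ s, HasDerivAt F (F' x) x) :
    ContinuousOn (fun x ↦ (𝐞 (F x) : ℂ)) s :=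
  differentiable_fourierChar.continuous.comp_continuousOn
    fun x hx ↦ (hF x hx).continuousAt.continuousWithinAt

/-- Integration by parts against `𝐞 ∘ F / F'`. -/
theorem two_pi_mul_integral_fourierChar_eq (hab : a ≤ b)
    (hF : ∀ x ∈ Icc a b, HasDerivAt F (F' x) x) (hF' : ∀ x ∈ Icc a b, HasDerivAt F' (F'' x) x)
    (hF'' : ContinuousOn F'' (Icc a b)) (hne : ∀ x ∈ Icc a b, F' x ≠ 0) :
    2 * π * Complex.I * ∫ x in a..b, (𝐞 (F x) : ℂ) = 𝐞 (F b) / F' b - 𝐞 (F a) / F' a +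
      ∫ x in a..b, (𝐞 (F x) : ℂ) * (F'' x / F' x ^ 2 : ℝ) := by
  have hE := continuousOn_fourierChar_comp hF
  have hrem : ContinuousOn (fun x ↦ (𝐞 (F x) : ℂ) * (F'' x / F' x ^ 2 : ℝ)) (Icc a b) :=
    hE.mul <| Complex.continuous_ofReal.comp_continuousOn <| hF''.div
      (ContinuousOn.pow (fun x hx ↦ (hF' x hx).continuousAt.continuousWithinAt) 2)
      fun x hx ↦ pow_ne_zero _ (hne x hx)
  rw [← uIcc_of_le hab] at hE hrem
  rw [← intervalIntegral.integral_eq_sub_of_hasDerivAt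
    (fun x hx ↦ hasDerivAt_fourierChar_div (hF x (uIcc_of_le hab ▸ hx))
      (hF' x (uIcc_of_le hab ▸ hx)) (hne x (uIcc_of_le hab ▸ hx)))
    ((hE.intervalIntegrable.const_mul _).sub hrem.intervalIntegrable),
    intervalIntegral.integral_sub (hE.intervalIntegrable.const_mul _)
      hrem.intervalIntegrable, intervalIntegral.integral_const_mul, sub_add_cancel]

theorem norm_integral_fourierChar_le (hab : a ≤ b)
    (hF : ∀ x ∈ Icc a b, HasDerivAt F (F' x) x) (hF' : ∀ x ∈ Icc a b, HasDerivAt F' (F'' x) x)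
    (hF'' : ContinuousOn F'' (Icc a b)) (hμ : 0 < μ) (hμF : ∀ x ∈ Icc a b, μ ≤ |F' x|)
    (hFM : ∀ x ∈ Icc a b, |F'' x| ≤ M) :
    ‖∫ x in a..b, (𝐞 (F x) : ℂ)‖ ≤ 1 / μ + M * (b - a) / μ ^ 2 := by
  set G : ℝ → ℂ := fun x ↦ 𝐞 (F x) / F' x with hG
  set R : ℝ → ℂ := fun x ↦ 𝐞 (F x) * (F'' x / F' x ^ 2 : ℝ) with hR
  have hM : 0 ≤ M := (abs_nonneg _).trans (hFM a ⟨le_rfl, hab⟩)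
  have hparts : 2 * π * Complex.I * ∫ x in a..b, (𝐞 (F x) : ℂ) = G b - G a + ∫ x in a..b, R x :=
    two_pi_mul_integral_fourierChar_eq hab hF hF' hF'' fun x hx ↦
      abs_pos.1 (hμ.trans_le (hμF x hx))
  have hG_le : ∀ x ∈ Icc a b, ‖G x‖ ≤ 1 / μ := fun x hx ↦ by
    rw [hG, norm_div, Circle.norm_coe, Complex.norm_real]
    exact one_div_le_one_div_of_le hμ (hμF x hx)
  have hR_le : ‖∫ x in a..b, R x‖ ≤ M / μ ^ 2 * |b - a| := by
    refine intervalIntegral.norm_integral_le_of_norm_le_const fun x hx ↦ ?_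
    have hx' : x ∈ Icc a b := Ioc_subset_Icc_self (uIoc_of_le hab ▸ hx)
    rw [hR, norm_mul, Circle.norm_coe, one_mul, Complex.norm_real, norm_eq_abs, abs_div, abs_pow]
    gcongr
    exacts [hFM x hx', hμF x hx']
  have hnorm : 2 * π * ‖∫ x in a..b, (𝐞 (F x) : ℂ)‖ ≤
      1 / μ + 1 / μ + M / μ ^ 2 * |b - a| := by
    calc 2 * π * ‖∫ x in a..b, (𝐞 (F x) : ℂ)‖ = ‖G b - G a + ∫ x in a..b, R x‖ := by
          rw [← hparts, norm_mul]; simp [abs_of_pos pi_pos]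
      _ ≤ ‖G b‖ + ‖G a‖ + ‖∫ x in a..b, R x‖ := norm_add_le_of_le (norm_sub_le _ _) le_rfl
      _ ≤ _ := by
        gcongr
        exacts [hG_le b ⟨hab, le_rfl⟩, hG_le a ⟨le_rfl, hab⟩]
  rw [abs_of_nonneg (by linarith), div_mul_eq_mul_div] at hnorm
  have hrem : 0 ≤ M * (b - a) / μ ^ 2 :=
    div_nonneg (mul_nonneg hM (by linarith)) (by positivity)
  nlinarith [pi_gt_three, norm_nonneg (∫ x in a..b, (𝐞 (F x) : ℂ))]

theorem exists_subinterval_near (hab : a ≤ b) (hr : 0 ≤ r) (c : ℝ) :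
    ∃ s t, a ≤ s ∧ s ≤ t ∧ t ≤ b ∧ t - s ≤ 2 * r ∧ (a = s ∨ s ≤ c - r) ∧ (t = b ∨ c + r ≤ t) :=
  ⟨max a (min b (c - r)), max a (min b (c + r)), by grind⟩

theorem norm_integral_fourierChar_le_of_far (hab : a ≤ b) (hr : 0 ≤ r)
    (hF : ∀ x ∈ Icc a b, HasDerivAt F (F' x) x) (hF' : ∀ x ∈ Icc a b, HasDerivAt F' (F'' x) x)
    (hF'' : ContinuousOn F'' (Icc a b)) (hμ : 0 < μ)
    (hμF : ∀ x ∈ Icc a b, r ≤ |x - c| → μ ≤ |F' x|) (hFM : ∀ x ∈ Icc a b, |F'' x| ≤ M) :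
    ‖∫ x in a..b, (𝐞 (F x) : ℂ)‖ ≤ 2 * r + 2 * (1 / μ + M * (b - a) / μ ^ 2) := by
  have hM : 0 ≤ M := (abs_nonneg _).trans (hFM a ⟨le_rfl, hab⟩)
  have hfar : ∀ u v, a ≤ u → u ≤ v → v ≤ b → (u = v ∨ v ≤ c - r ∨ c + r ≤ u) →
      ‖∫ x in u..v, (𝐞 (F x) : ℂ)‖ ≤ 1 / μ + M * (b - a) / μ ^ 2 := by
    rintro u v hu huv hv hcase
    have hsub : Icc u v ⊆ Icc a b := Icc_subset_Icc hu hv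
    obtain rfl | hcase := hcase
    · rw [intervalIntegral.integral_same, norm_zero]
      have := sub_nonneg.2 hab
      positivity
    refine (norm_integral_fourierChar_le huv (fun x hx ↦ hF x (hsub hx))
      (fun x hx ↦ hF' x (hsub hx)) (hF''.mono hsub) hμ (fun x hx ↦ hμF x (hsub hx) ?_)
      fun x hx ↦ hFM x (hsub hx)).trans (by gcongr)
    rcases hcase with h | h
    · exact le_abs.2 (Or.inr (by linarith [hx.2]))
    · exact le_abs.2 (Or.inl (by linarith [hx.1]))
  obtain ⟨s, t, has, hst, htb, hts, hs, ht⟩ := exists_subinterval_near hab hr c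
  have hInt : ∀ u v, a ≤ u → u ≤ v → v ≤ b →
      IntervalIntegrable (fun x ↦ (𝐞 (F x) : ℂ)) volume u v := fun u v hu huv hv ↦
    ContinuousOn.intervalIntegrable <| uIcc_of_le huv ▸
      (continuousOn_fourierChar_comp hF).mono (Icc_subset_Icc hu hv)
  have hmid : ‖∫ x in s..t, (𝐞 (F x) : ℂ)‖ ≤ 2 * r := by
    refine (intervalIntegral.norm_integral_le_of_norm_le_const fun x _ ↦
      (Circle.norm_coe (𝐞 (F x))).le).trans ?_
    rwa [one_mul, abs_of_nonneg (sub_nonneg.2 hst)]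
  rw [← intervalIntegral.integral_add_adjacent_intervals (hInt a t le_rfl (has.trans hst) htb)
      (hInt t b (has.trans hst) htb le_rfl),
    ← intervalIntegral.integral_add_adjacent_intervals (hInt a s le_rfl has (hst.trans htb))
      (hInt s t has hst htb)]
  linarith [norm_add₃_le (a := ∫ x in a..s, (𝐞 (F x) : ℂ)) (b := ∫ x in s..t, (𝐞 (F x) : ℂ))
    (c := ∫ x in t..b, (𝐞 (F x) : ℂ)), hfar a s le_rfl has (hst.trans htb) (hs.imp_right .inl),
    hfar t b (has.trans hst) htb le_rfl (ht.imp_right .inr)]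

end VanDerCorput

theorem exists_forall_le_abs_linear {a b ν r : ℝ} (hν : 0 ≤ ν) (hab : ν ≤ |a| + |b|)
    (hr₀ : 0 < r) (hr₁ : r ≤ 1) :
    ∃ c : ℝ, ∀ x ∈ I, r ≤ |x - c| → r * ν / 3 ≤ |a * x + b| := by
  obtain ha | ha := lt_or_ge |a| (ν / 3)
  · refine ⟨0, fun x hx _ ↦ ?_⟩
    have hax : |a * x| ≤ |a| := by
      rw [abs_mul, abs_of_nonneg hx.1]
      exact mul_le_of_le_one_right (abs_nonneg a) hx.2
    have hsub := abs_sub_abs_le_abs_sub b (-(a * x))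
    rw [abs_neg, sub_neg_eq_add, add_comm b] at hsub
    nlinarith
  · obtain rfl | ha₀ := eq_or_ne a 0
    · obtain rfl : ν = 0 := by linarith [abs_zero (α := ℝ) ▸ ha]
      exact ⟨0, fun x _ _ ↦ by simp⟩
    refine ⟨-b / a, fun x _ hx ↦ ?_⟩
    calc r * ν / 3 = ν / 3 * r := by ring
      _ ≤ |a| * |x - -b / a| := by gcongr
      _ = |a * x + b| := by rw [← abs_mul]; congr 1; field_simp; ring

section MoebiusPhase

variable {g h : Matrix (Fin 2) (Fin 2) ℕ} {x D P Δ r : ℝ}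

theorem IsAdmissible.hasDerivAt_moebius (hg : IsAdmissible g) (hx : 0 ≤ x) :
    HasDerivAt (moebius g) ((g 1 0 * x + g 1 1) ^ 2)⁻¹ x := by
  have hlin (a b : ℝ) : HasDerivAt (fun y : ℝ ↦ a * y + b) a x := by
    simpa using ((hasDerivAt_id x).const_mul a).add_const b
  refine ((hlin (g 0 0) (g 0 1)).div (hlin (g 1 0) (g 1 1)) (hg.linear_pos hx).ne').congr_deriv ?_
  rw [inv_eq_one_div]
  congr 1
  linear_combination hg.det_eq_real

theorem hasDerivAt_inv_linear_sq {a b : ℝ} (hx : a * x + b ≠ 0) :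
    HasDerivAt (fun y ↦ ((a * y + b) ^ 2)⁻¹) (-(2 * (a / (a * x + b) ^ 3))) x := by
  have hlin : HasDerivAt (fun y : ℝ ↦ a * y + b) a x := by
    simpa using ((hasDerivAt_id x).const_mul a).add_const b
  refine ((hlin.pow 2).inv (pow_ne_zero 2 hx)).congr_deriv ?_
  simp only [Pi.pow_apply, Nat.cast_ofNat, Nat.add_one_sub_one, pow_one]
  field_simp

theorem IsAdmissible.mul_abs_bottomRatio_sub_le (hg : IsAdmissible g) (hh : IsAdmissible h) :
    g 1 1 * |bottomRatio g - bottomRatio h| ≤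
      |(g 1 0 : ℝ) - h 1 0| + |(g 1 1 : ℝ) - h 1 1| := by
  have hg₀ := hg.one_le_den
  calc g 1 1 * |bottomRatio g - bottomRatio h|
      = |(g 1 0 - h 1 0) - bottomRatio h * (g 1 1 - h 1 1)| := by
        have := hh.one_le_den
        rw [← abs_of_nonneg (show (0 : ℝ) ≤ g 1 1 by positivity), ← abs_mul, Nat.abs_cast]
        simp only [bottomRatio]
        congr 1
        field_simp
        ring
    _ ≤ |(g 1 0 : ℝ) - h 1 0| + |bottomRatio h * (g 1 1 - h 1 1)| := abs_sub _ _
    _ ≤ |(g 1 0 : ℝ) - h 1 0| + |(g 1 1 : ℝ) - h 1 1| := by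
        rw [abs_mul, abs_of_nonneg hh.bottomRatio_mem.1]
        gcongr
        exact mul_le_of_le_one_left (abs_nonneg _) hh.bottomRatio_mem.2

/-- The derivative of `moebius g - moebius h` is, up to a positive factor, the linear form with
coefficients the differences of the bottom rows, which is large outside a short interval. -/
theorem IsAdmissible.exists_forall_le_abs_deriv_sub (hg : IsAdmissible g) (hh : IsAdmissible h)
    (hD : 0 < D) (hhD : h 1 1 ≤ D * P) (hr₀ : 0 < r) (hr₁ : r ≤ 1)
    (hΔ : Δ ≤ |bottomRatio g - bottomRatio h|) (hΔ₀ : 0 ≤ Δ) :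
    ∃ c : ℝ, ∀ x ∈ I, r ≤ |x - c| → r * Δ / (24 * P ^ 2 * D ^ 2) ≤
      |((g 1 0 * x + g 1 1) ^ 2)⁻¹ - ((h 1 0 * x + h 1 1 : ℝ) ^ 2)⁻¹| := by
  have hg₀ := hg.one_le_den
  have hP : 0 < P := pos_of_mul_pos_right (by linarith [hh.one_le_den]) hD.le
  obtain ⟨c, hc⟩ := exists_forall_le_abs_linear (by positivity)
    ((mul_le_mul_of_nonneg_left hΔ (by positivity)).trans (hg.mul_abs_bottomRatio_sub_le hh))
    hr₀ hr₁
  refine ⟨c, fun x hx hxc ↦ ?_⟩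
  have hlinear := hc x hx hxc
  have hu := hg.linear_pos hx.1
  have hv := hh.linear_pos hx.1
  have hu_le := hg.linear_le hx
  have hv_le := (hh.linear_le hx).trans (mul_le_mul_of_nonneg_left hhD zero_le_two)
  rw [show ((g 1 0 : ℝ) - h 1 0) * x + (g 1 1 - h 1 1) =
    (g 1 0 * x + g 1 1) - (h 1 0 * x + h 1 1) by ring] at hlinear
  generalize (g 1 0 : ℝ) * x + g 1 1 = u at *
  generalize (h 1 0 : ℝ) * x + h 1 1 = v at *
  have hsum : 1 / (2 * g 1 1 * (2 * (D * P)) ^ 2) ≤ (u + v) / (u ^ 2 * v ^ 2) :=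
    calc 1 / (2 * g 1 1 * (2 * (D * P)) ^ 2) ≤ 1 / (u * v ^ 2) := by gcongr
      _ = u / (u ^ 2 * v ^ 2) := by field_simp
      _ ≤ (u + v) / (u ^ 2 * v ^ 2) := by gcongr; linarith
  calc r * Δ / (24 * P ^ 2 * D ^ 2)
      = r * (g 1 1 * Δ) / 3 * (1 / (2 * g 1 1 * (2 * (D * P)) ^ 2)) := by field_simp; ring
    _ ≤ |u - v| * ((u + v) / (u ^ 2 * v ^ 2)) := by gcongr
    _ = |(u ^ 2)⁻¹ - (v ^ 2)⁻¹| := by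
        rw [← abs_of_pos (show 0 < (u + v) / (u ^ 2 * v ^ 2) by positivity), ← abs_mul,
          ← abs_neg]
        congr 1
        field_simp
        ring

theorem IsAdmissible.div_linear_pow_mem (hg : IsAdmissible g) (hx : 0 ≤ x) (hD : 0 < D)
    (hgD : D ≤ g 1 1) : (g 1 0 : ℝ) / (g 1 0 * x + g 1 1) ^ 3 ∈ Icc 0 (1 / D ^ 2) := by
  have hlin := den_le_linear (g := g) hx
  have hbot : (g 1 0 : ℝ) ≤ g 1 1 := by exact_mod_cast hg.bottom_le
  have hpos := hg.linear_pos hx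
  refine ⟨by positivity, ?_⟩
  rw [div_le_div_iff₀ (by positivity) (by positivity), one_mul, pow_succ' _ 2]
  gcongr <;> linarith

theorem IsAdmissible.norm_integral_fourierChar_moebius_sub_le (hg : IsAdmissible g)
    (hh : IsAdmissible h) {t : ℝ} (ht : t ≠ 0) (hD : 0 < D) (hgD : D ≤ g 1 1) (hhD : D ≤ h 1 1)
    (hhDP : h 1 1 ≤ D * P) (hr₀ : 0 < r) (hr₁ : r ≤ 1)
    (hΔ : Δ ≤ |bottomRatio g - bottomRatio h|) (hΔ₀ : 0 < Δ) :
    ‖∫ x in (0 : ℝ)..1, (𝐞 (t * (moebius g x - moebius h x)) : ℂ)‖ ≤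
      2 * r + 2 * (24 * P ^ 2 / (|t| / D ^ 2 * r * Δ)
        + 1152 * P ^ 4 / (|t| / D ^ 2 * r ^ 2 * Δ ^ 2)) := by
  have hP : 0 < P := pos_of_mul_pos_right (by linarith [hh.one_le_den]) hD.le
  obtain ⟨c, hc⟩ := hg.exists_forall_le_abs_deriv_sub hh hD hhDP hr₀ hr₁ hΔ hΔ₀.le
  refine (norm_integral_fourierChar_le_of_far (F := fun x ↦ t * (moebius g x - moebius h x))
    (F' := fun x ↦ t * (((g 1 0 * x + g 1 1) ^ 2)⁻¹ - ((h 1 0 * x + h 1 1) ^ 2)⁻¹))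
    (F'' := fun x ↦ t * (-(2 * (g 1 0 / (g 1 0 * x + g 1 1) ^ 3)) -
      -(2 * (h 1 0 / (h 1 0 * x + h 1 1) ^ 3))))
    (c := c) (μ := |t| * (r * Δ / (24 * P ^ 2 * D ^ 2))) (M := |t| * (2 / D ^ 2)) zero_le_one hr₀.le
    (fun x hx ↦ ((hg.hasDerivAt_moebius hx.1).sub (hh.hasDerivAt_moebius hx.1)).const_mul t)
    (fun x hx ↦ ((hasDerivAt_inv_linear_sq (hg.linear_pos hx.1).ne').sub
      (hasDerivAt_inv_linear_sq (hh.linear_pos hx.1).ne')).const_mul t)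
    ?_ (by positivity) (fun x hx hxc ↦ ?_) fun x hx ↦ ?_).trans (add_le_add_right ?_ _)
  · have hdiv {k : Matrix (Fin 2) (Fin 2) ℕ} (hk : IsAdmissible k) :
        ContinuousOn (fun x : ℝ ↦ (k 1 0 : ℝ) / (k 1 0 * x + k 1 1) ^ 3) (Icc 0 1) :=
      ContinuousOn.div (by fun_prop) (by fun_prop) fun x hx ↦ (pow_pos (hk.linear_pos hx.1) 3).ne'
    have := hdiv hg
    have := hdiv hh
    fun_prop
  · rw [abs_mul]
    gcongr
    exact hc x hx hxc
  · have hgx := hg.div_linear_pow_mem hx.1 hD hgD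
    have hhx := hh.div_linear_pow_mem hx.1 hD hhD
    rw [abs_mul, show (2 : ℝ) / D ^ 2 = 2 * (1 / D ^ 2) by ring]
    gcongr
    exact abs_le.2 ⟨by linarith [hgx.2, hhx.1], by linarith [hgx.1, hhx.2]⟩
  · rw [sub_zero, mul_one]
    refine le_of_eq ?_
    field_simp
    ring

end MoebiusPhase

/-! ### The second moment method for approximation modulo one -/

section SecondMoment

variable {ι κ Ω : Type*} {η t : ℝ}

theorem dni_nonneg (x : ℝ) : 0 ≤ dni x := abs_nonneg _

theorem dni_le_abs_sub_add (x y : ℝ) : dni x ≤ |x - y| + dni y :=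
  (round_le x (round y)).trans (abs_sub_le x y (round y))

theorem four_mul_dni_le (t : ℝ) : 4 * dni t ≤ ‖(𝐞 t : ℂ) - 1‖ := by
  set r := t - round t with hr
  have hdni : dni t = |r| := rfl
  have hr_le : |r| ≤ 1 / 2 := abs_sub_round t
  have hper : (𝐞 t : ℂ) = Complex.exp (Complex.I * (2 * π * r : ℝ)) := by
    rw [fourierChar_apply, Complex.exp_eq_exp_iff_exists_int]
    exact ⟨round t, by rw [hr]; push_cast; ring⟩
  have hsin : |sin (π * r)| = sin (π * |r|) := by
    rw [abs_sin_eq_sin_abs_of_abs_le_pi] <;> rw [abs_mul, abs_of_pos pi_pos]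
    nlinarith [pi_pos]
  rw [hdni, hper, Complex.norm_exp_I_mul_ofReal_sub_one, norm_mul, norm_eq_abs, norm_eq_abs,
    abs_two, mul_assoc, mul_div_cancel_left₀ _ two_ne_zero, hsin]
  have hjordan := Real.mul_le_sin (x := π * |r|) (by positivity) (by nlinarith [pi_pos])
  rw [← mul_assoc, div_mul_cancel₀ _ pi_ne_zero] at hjordan
  linarith

theorem norm_sum_range_fourierChar_le (hη : 0 < η) (ht : η ≤ dni t) (H : ℕ) :
    ‖∑ k ∈ Finset.range H, (𝐞 (k * t) : ℂ)‖ ≤ 1 / (2 * η) := by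
  have hpow (k : ℕ) : (𝐞 (k * t) : ℂ) = 𝐞 t ^ k := by
    rw [← nsmul_eq_mul, AddChar.map_nsmul_eq_pow, Circle.coe_pow]
  simp only [hpow]
  have hgeom : ‖∑ k ∈ Finset.range H, (𝐞 t : ℂ) ^ k‖ * ‖(𝐞 t : ℂ) - 1‖ ≤ 2 := by
    rw [← norm_mul, geom_sum_mul]
    refine (norm_sub_le _ _).trans ?_
    rw [norm_pow, Circle.norm_coe]
    norm_num
  rw [le_div_iff₀ (by positivity)]
  nlinarith [four_mul_dni_le t, norm_nonneg (∑ k ∈ Finset.range H, (𝐞 t : ℂ) ^ k)]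

theorem sq_norm_sum_fourierChar (s : Finset κ) (b : κ → ℝ) :
    ((‖∑ k ∈ s, (𝐞 (b k) : ℂ)‖ ^ 2 : ℝ) : ℂ) = ∑ k ∈ s, ∑ l ∈ s, (𝐞 (b k - b l) : ℂ) := by
  push_cast
  rw [← Complex.mul_conj', map_sum, Finset.sum_mul_sum]
  simp only [AddChar.map_sub_eq_div, div_eq_mul_inv, Circle.coe_mul, Circle.coe_inv_eq_conj]

variable [Fintype ι]

/-- If every `a i` stays away from the integers, then the sums `∑ k < H, 𝐞 (k a i)` are small,
so expanding the sum of their squares forces the frequencies `k - l ≠ 0` to carry mass. -/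
theorem card_sq_div_four_le_sum_offDiag (a : ι → ℝ) (H : ℕ) (hη : 0 < η)
    (hH : (1 / (2 * η)) ^ 2 ≤ H / 2) (ha : ∀ i, η ≤ dni (a i)) :
    (Fintype.card ι : ℝ) ^ 2 / 4 ≤
      ∑ p ∈ (Finset.range H).offDiag, ‖∑ i, (𝐞 (((p.1 : ℤ) - p.2 : ℤ) * a i) : ℂ)‖ ^ 2 := by
  set W := (Fintype.card ι : ℝ)
  set T : ℕ × ℕ → ℂ := fun p ↦ ∑ i, (𝐞 (((p.1 : ℤ) - p.2 : ℤ) * a i) : ℂ) with hT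
  set B : ℝ := ∑ i, ‖∑ k ∈ Finset.range H, (𝐞 (k * a i) : ℂ)‖ ^ 2 with hB
  have hsum : ∑ p ∈ (Finset.range H).offDiag, T p + W * H = B := by
    have hdiag : ∑ p ∈ (Finset.range H).diag, T p = W * H := by
      rw [Finset.sum_diag]
      simp [hT, W, mul_comm]
    rw [← hdiag, add_comm, ← Finset.sum_union (Finset.disjoint_diag_offDiag _),
      Finset.diag_union_offDiag, hB, Complex.ofReal_sum, hT, Finset.sum_comm]
    refine Finset.sum_congr rfl fun i _ ↦ ?_
    rw [sq_norm_sum_fourierChar, Finset.sum_product]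
    push_cast
    simp only [sub_mul]
  have hB_le : B ≤ W * (H / 2) := by
    refine (Finset.sum_le_card_nsmul _ _ _ fun i _ ↦ ?_).trans_eq (nsmul_eq_mul _ _)
    exact (pow_le_pow_left₀ (norm_nonneg _) (norm_sum_range_fourierChar_le hη (ha i) H) 2).trans hH
  have hoff : W * (H / 2) ≤ ‖∑ p ∈ (Finset.range H).offDiag, T p‖ := by
    rw [eq_sub_of_add_eq hsum, ← Complex.ofReal_natCast, ← Complex.ofReal_mul,
      ← Complex.ofReal_sub, Complex.norm_real, norm_eq_abs, abs_sub_comm]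
    exact le_trans (by linarith) (le_abs_self _)
  have hcard : ((Finset.range H).offDiag.card : ℝ) ≤ (H : ℝ) ^ 2 := by
    rw [Finset.offDiag_card, Finset.card_range]
    exact_mod_cast (Nat.sub_le _ _).trans_eq (sq H).symm
  have hH₀ : (0 : ℝ) < H := by
    have : 0 < (1 / (2 * η)) ^ 2 := by positivity
    linarith
  refine le_of_mul_le_mul_left ?_ (pow_pos hH₀ 2)
  calc (H : ℝ) ^ 2 * (W ^ 2 / 4) = (W * (H / 2)) ^ 2 := by ring
    _ ≤ (∑ p ∈ (Finset.range H).offDiag, ‖T p‖) ^ 2 := by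
        gcongr
        exact hoff.trans (norm_sum_le _ _)
    _ ≤ (Finset.range H).offDiag.card * ∑ p ∈ (Finset.range H).offDiag, ‖T p‖ ^ 2 :=
        sq_sum_le_card_mul_sum_sq
    _ ≤ (H : ℝ) ^ 2 * ∑ p ∈ (Finset.range H).offDiag, ‖T p‖ ^ 2 := by gcongr

variable [MeasurableSpace Ω] (μ : Measure Ω) [IsProbabilityMeasure μ] {f : ι → Ω → ℝ} {ε : ℝ}

theorem integrable_fourierChar_comp {φ : Ω → ℝ} (hφ : Measurable φ) :
    Integrable (fun x ↦ (𝐞 (φ x) : ℂ)) μ :=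
  .of_bound (differentiable_fourierChar.continuous.measurable.comp hφ).aestronglyMeasurable 1
    (.of_forall fun _ ↦ (Circle.norm_coe _).le)

theorem integral_sq_norm_sum_fourierChar_le (hf : ∀ i, Measurable (f i)) (hε : 0 ≤ ε)
    (hoff : ∀ i j, i ≠ j → ‖∫ x, (𝐞 (f i x - f j x) : ℂ) ∂μ‖ ≤ ε) :
    ∫ x, ‖∑ i, (𝐞 (f i x) : ℂ)‖ ^ 2 ∂μ ≤ Fintype.card ι + (Fintype.card ι : ℝ) ^ 2 * ε := by
  classical
  have hInt (i j : ι) : Integrable (fun x ↦ (𝐞 (f i x - f j x) : ℂ)) μ :=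
    integrable_fourierChar_comp μ ((hf i).sub (hf j))
  have hexpand : ((∫ x, ‖∑ i, (𝐞 (f i x) : ℂ)‖ ^ 2 ∂μ : ℝ) : ℂ) =
      ∑ i, ∑ j, ∫ x, (𝐞 (f i x - f j x) : ℂ) ∂μ := by
    refine integral_complex_ofReal.symm.trans ?_
    simp only [sq_norm_sum_fourierChar]
    refine (integral_finsetSum _ fun i _ ↦ integrable_finsetSum _ fun j _ ↦ hInt i j).trans ?_
    exact Finset.sum_congr rfl fun i _ ↦ integral_finsetSum _ fun j _ ↦ hInt i j
  have hentry (i j : ι) : ‖∫ x, (𝐞 (f i x - f j x) : ℂ) ∂μ‖ ≤ (if i = j then 1 else 0) + ε := by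
    obtain rfl | hij := eq_or_ne i j
    · simpa using hε
    · simpa [hij] using hoff i j hij
  calc ∫ x, ‖∑ i, (𝐞 (f i x) : ℂ)‖ ^ 2 ∂μ
      ≤ ‖((∫ x, ‖∑ i, (𝐞 (f i x) : ℂ)‖ ^ 2 ∂μ : ℝ) : ℂ)‖ := by
        rw [Complex.norm_real]; exact le_abs_self _
    _ ≤ ∑ i, ∑ j, ((if i = j then 1 else 0) + ε) := by
        rw [hexpand]
        exact norm_sum_le_of_le _ fun i _ ↦ norm_sum_le_of_le _ fun j _ ↦ hentry i j
    _ = Fintype.card ι + (Fintype.card ι : ℝ) ^ 2 * ε := by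
        simp [Finset.sum_add_distrib]; ring

theorem measureReal_mul_card_sq_le (hf : ∀ i, Measurable (f i)) {E : Set Ω}
    (hE : MeasurableSet E) {δ : ℝ} {H : ℕ} (hη : 0 < η) (hH : (1 / (2 * η)) ^ 2 ≤ H / 2)
    (hε : 0 ≤ ε) (hmiss : ∀ x ∈ E, ∀ i, η ≤ dni (f i x - δ))
    (hoff : ∀ h : ℤ, h ≠ 0 → ∀ i j, i ≠ j → ‖∫ x, (𝐞 (h * (f i x - f j x)) : ℂ) ∂μ‖ ≤ ε) :
    μ.real E * ((Fintype.card ι : ℝ) ^ 2 / 4) ≤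
      (H : ℝ) ^ 2 * (Fintype.card ι + (Fintype.card ι : ℝ) ^ 2 * ε) := by
  set T : ℕ × ℕ → Ω → ℝ :=
    fun p x ↦ ‖∑ i, (𝐞 (((p.1 : ℤ) - p.2 : ℤ) * (f i x - δ)) : ℂ)‖ ^ 2
  have hT_int (p : ℕ × ℕ) : Integrable (T p) μ := by
    have hmeas : Measurable fun x ↦ ∑ i, (𝐞 (((p.1 : ℤ) - p.2 : ℤ) * (f i x - δ)) : ℂ) :=
      Finset.measurable_sum _ fun i _ ↦ differentiable_fourierChar.continuous.measurable.comp
        (((hf i).sub_const δ).const_mul _)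
    refine .of_bound (hmeas.norm.pow_const 2).aestronglyMeasurable ((Fintype.card ι : ℝ) ^ 2)
      (.of_forall fun x ↦ ?_)
    rw [norm_eq_abs, abs_of_nonneg (by positivity)]
    exact pow_le_pow_left₀ (norm_nonneg _)
      ((norm_sum_le _ _).trans_eq (by simp [Circle.norm_coe])) 2
  have hT_le : ∀ p ∈ (Finset.range H).offDiag,
      ∫ x, T p x ∂μ ≤ Fintype.card ι + (Fintype.card ι : ℝ) ^ 2 * ε := fun p hp ↦ by
    refine integral_sq_norm_sum_fourierChar_le μ
      (fun i ↦ ((hf i).sub_const δ).const_mul _) hε fun i j hij ↦ ?_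
    have hp' : (p.1 : ℤ) - p.2 ≠ 0 := by
      have := (Finset.mem_offDiag.1 hp).2.2
      lia
    simpa only [← mul_sub, sub_sub_sub_cancel_right] using hoff _ hp' i j hij
  have hsum_int := integrable_finsetSum (μ := μ) (Finset.range H).offDiag fun p _ ↦ hT_int p
  have hcard : ((Finset.range H).offDiag.card : ℝ) ≤ (H : ℝ) ^ 2 := by
    rw [Finset.offDiag_card, Finset.card_range]
    exact_mod_cast (Nat.sub_le _ _).trans_eq (sq H).symm
  calc μ.real E * ((Fintype.card ι : ℝ) ^ 2 / 4)
      = ∫ _ in E, (Fintype.card ι : ℝ) ^ 2 / 4 ∂μ := by rw [setIntegral_const, smul_eq_mul]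
    _ ≤ ∫ x in E, ∑ p ∈ (Finset.range H).offDiag, T p x ∂μ :=
        setIntegral_mono_on (integrable_const _) hsum_int.integrableOn hE fun x hx ↦
          card_sq_div_four_le_sum_offDiag _ H hη hH (hmiss x hx)
    _ ≤ ∫ x, ∑ p ∈ (Finset.range H).offDiag, T p x ∂μ :=
        setIntegral_le_integral hsum_int (.of_forall fun x ↦ by positivity)
    _ = ∑ p ∈ (Finset.range H).offDiag, ∫ x, T p x ∂μ := integral_finsetSum _ fun p _ ↦ hT_int p
    _ ≤ (Finset.range H).offDiag.card • _ := Finset.sum_le_card_nsmul _ _ _ hT_le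
    _ ≤ _ := by rw [nsmul_eq_mul]; gcongr

end SecondMoment

/-! ### Words hitting a prescribed residue -/

theorem IsAdmissible.div_sq_le_volume_image {g : Matrix (Fin 2) (Fin 2) ℕ} (hg : IsAdmissible g) :
    1 / (2 * g 1 1 : ℝ) ^ 2 ≤ volume.real (moebius g '' I) := by
  have hsub : uIcc (moebius g 0) (moebius g 1) ⊆ moebius g '' I := by
    simpa only [uIcc_of_le (zero_le_one (α := ℝ))] using
      intermediate_value_uIcc (f := moebius g) (a := 0) (b := 1)
        (by simpa only [uIcc_of_le (zero_le_one (α := ℝ))] using hg.continuousOn_moebius)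
  have hcompact := isCompact_Icc.image_of_continuousOn hg.continuousOn_moebius
  refine le_trans ?_ (measureReal_mono hsub hcompact.measure_lt_top.ne)
  rw [measureReal_def, volume_interval, ENNReal.toReal_ofReal (abs_nonneg _)]
  simpa using hg.div_sq_le_abs_moebius_sub (x := 1) (y := 0) (by simp) (by simp)

namespace MoebiusSystem

variable {S : MoebiusSystem} {g : Matrix (Fin 2) (Fin 2) ℕ} {n : ℝ} {J m : ℕ}

variable (S) in
/-- The union of the images of the unit interval under all words of length `m`. -/
def cylinders (m : ℕ) : Set ℝ :=
  ⋃ w : List.Vector (Fin S.card) m, moebius (S.word w.toList) '' I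

theorem measurableSet_cylinders : MeasurableSet (S.cylinders m) :=
  .iUnion fun _ ↦ (isCompact_Icc.image_of_continuousOn
    (isAdmissible_word _).continuousOn_moebius).measurableSet

theorem cylinders_subset : S.cylinders m ⊆ I :=
  iUnion_subset fun _ ↦ (mapsTo_moebius_word _).image_subset

theorem card_pow_div_le_volume_cylinders :
    (S.card : ℝ) ^ m / (4 * (S.growth ^ m) ^ 2) ≤ volume.real (S.cylinders m) := by
  have hdisj : Pairwise (Function.onFun Disjoint fun w : List.Vector (Fin S.card) m ↦
      moebius (S.word w.toList) '' I) := by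
    refine fun v w hvw ↦ disjoint_left.2 ?_
    rintro _ ⟨x, hx, rfl⟩ ⟨y, hy, hxy⟩
    have hgap := gap_div_le_abs_moebius_word_sub (l := v.toList) (l' := w.toList) (by simp)
      (fun h ↦ hvw (Subtype.ext h)) hx hy
    rw [hxy, sub_self, abs_zero] at hgap
    exact hgap.not_gt (div_pos S.gap_pos (pow_pos (by linarith [S.one_le_growth]) _))
  have hword (w : List.Vector (Fin S.card) m) :
      1 / (4 * ((S.growth : ℝ) ^ m) ^ 2) ≤ volume.real (moebius (S.word w.toList) '' I) := by
    have hadm := isAdmissible_word w.toList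
    have hden : (S.word w.toList 1 1 : ℝ) ≤ (S.growth : ℝ) ^ m := by
      exact_mod_cast (den_word_le w.toList).trans_eq (by simp)
    have hpos := hadm.one_le_den
    refine le_trans ?_ hadm.div_sq_le_volume_image
    rw [mul_pow, show (2 : ℝ) ^ 2 = 4 by norm_num]
    gcongr
  have hmeas (w : List.Vector (Fin S.card) m) :=
    isCompact_Icc.image_of_continuousOn (isAdmissible_word w.toList).continuousOn_moebius
  rw [cylinders, measureReal_iUnion_fintype hdisj (fun w ↦ (hmeas w).measurableSet)
    (fun w ↦ (hmeas w).measure_lt_top.ne)]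
  refine le_trans (le_of_eq ?_) (Finset.sum_le_sum fun w _ ↦ hword w)
  rw [Finset.sum_const, Finset.card_univ, card_vector, Fintype.card_fin, nsmul_eq_mul,
    Nat.cast_pow, mul_one_div]

theorem card_pow_le (S : MoebiusSystem) (m : ℕ) :
    (S.card : ℝ) ^ m ≤ 4 * ((S.growth : ℝ) ^ m) ^ 2 := by
  have hpos : (0 : ℝ) < S.growth := by linarith [S.one_le_growth]
  have hvol : volume.real (S.cylinders m) ≤ 1 := by
    simpa using measureReal_mono (μ := volume) (cylinders_subset (S := S) (m := m))
      isCompact_Icc.measure_lt_top.ne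
  exact (div_le_one (by positivity)).1 (card_pow_div_le_volume_cylinders.trans hvol)

variable (S) in
/-- The constant in the decay of the exponential integrals attached to two distinct words. -/
noncomputable def decayConst : ℝ := 2 + 48 / S.gap + 2304 / S.gap ^ 2

theorem decayConst_pos : 0 < S.decayConst := by
  have := S.gap_pos
  unfold decayConst
  positivity

theorem norm_integral_fourierChar_word_sub_le (hg : IsAdmissible g) {l l' : List (Fin S.card)}
    (hl : l.length = m) (hl' : l'.length = m) (hne : l ≠ l')
    (hn : (S.growth ^ m : ℝ) ^ 14 * (g 1 1 : ℝ) ^ 2 ≤ |n|) :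
    ‖∫ x in (0 : ℝ)..1, (𝐞 (n * (moebius (g * S.word l) x - moebius (g * S.word l') x)) : ℂ)‖ ≤
      S.decayConst / (S.growth ^ m : ℝ) ^ 2 := by
  have hgap := S.gap_pos
  have hD := hg.one_le_den
  have hq : (1 : ℝ) ≤ S.growth ^ m := one_le_pow₀ S.one_le_growth
  have hΔ := gap_div_le_abs_bottomRatio_sub hg (hl.trans hl'.symm) hne
  have hden' : ((g * S.word l') 1 1 : ℝ) ≤ g 1 1 * S.growth ^ m := by
    have := den_mul_word_le hg l'
    rw [hl', mul_comm] at this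
    exact_mod_cast this
  rw [hl, mul_comm 2, pow_mul] at hΔ
  set q : ℝ := S.growth ^ m
  have hn₀ : n ≠ 0 := abs_pos.1 (lt_of_lt_of_le (by positivity) hn)
  have hnD : q ^ 14 ≤ |n| / (g 1 1 : ℝ) ^ 2 := (le_div_iff₀ (by positivity)).2 hn
  refine ((isAdmissible_mul_word hg l).norm_integral_fourierChar_moebius_sub_le
    (isAdmissible_mul_word hg l') hn₀ (by positivity) (by exact_mod_cast den_le_den_mul_word g l)
    (by exact_mod_cast den_le_den_mul_word g l') hden' (r := 1 / q ^ 2) (by positivity)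
    (div_le_one_of_le₀ (one_le_pow₀ hq) (by positivity)) hΔ (by positivity)).trans ?_
  calc 2 * (1 / q ^ 2) + 2 * (24 * q ^ 2 / (|n| / (g 1 1 : ℝ) ^ 2 * (1 / q ^ 2) * (S.gap / q ^ 2))
        + 1152 * q ^ 4 / (|n| / (g 1 1 : ℝ) ^ 2 * (1 / q ^ 2) ^ 2 * (S.gap / q ^ 2) ^ 2))
      ≤ 2 * (1 / q ^ 2) + 2 * (24 * q ^ 2 / (q ^ 14 * (1 / q ^ 2) * (S.gap / q ^ 2))
        + 1152 * q ^ 4 / (q ^ 14 * (1 / q ^ 2) ^ 2 * (S.gap / q ^ 2) ^ 2)) := by gcongr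
    _ = 2 / q ^ 2 + 48 / S.gap / q ^ 8 + 2304 / S.gap ^ 2 / q ^ 2 := by field_simp; ring
    _ ≤ 2 / q ^ 2 + 48 / S.gap / q ^ 2 + 2304 / S.gap ^ 2 / q ^ 2 := by
        gcongr 2 / q ^ 2 + _ / q ^ ?_ + _
        norm_num
    _ = S.decayConst / q ^ 2 := by rw [decayConst]; ring

variable (S) in
/-- A system with so many maps, compared with their contraction, that the second moment method
produces words hitting every residue. -/
structure IsRich : Prop where
  growth_le : S.growth ≤ S.minDen ^ 2
  growth_pow_le : S.growth ^ 33 ≤ S.card ^ 17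

theorem IsRich.mul_one_div_den_sq_le (hS : S.IsRich) (hg : IsAdmissible g) (hJ : 1 ≤ J)
    (hn : n ≤ (S.growth : ℝ) ^ (56 * J + 2) * (g 1 1 : ℝ) ^ 2) {l : List (Fin S.card)}
    (hl : l.length = 68 * J) :
    n * (1 / ((g * S.word l) 1 1 : ℝ) ^ 2) ≤ 1 / 2 ^ J / 2 := by
  have hD := hg.one_le_den
  have hQ : (4 : ℝ) ≤ S.growth := by exact_mod_cast S.four_le_growth
  have hden : (S.growth : ℝ) ^ (68 * J) * (g 1 1 : ℝ) ^ 2 ≤ ((g * S.word l) 1 1 : ℝ) ^ 2 := by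
    have hword := le_den_mul_word g l
    have hgrowth := hS.growth_le
    rw [hl] at hword
    norm_cast
    calc S.growth ^ (68 * J) * g 1 1 ^ 2 ≤ (S.minDen ^ 2) ^ (68 * J) * g 1 1 ^ 2 := by gcongr
      _ = (S.minDen ^ (68 * J) * g 1 1) ^ 2 := by ring
      _ ≤ _ := by gcongr
  rw [mul_one_div, div_div, ← pow_succ, div_le_div_iff₀ (lt_of_lt_of_le (by positivity) hden)
    (by positivity), one_mul]
  calc n * 2 ^ (J + 1)
      ≤ ((S.growth : ℝ) ^ (56 * J + 2) * (g 1 1 : ℝ) ^ 2) * (S.growth : ℝ) ^ (J + 1) := by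
        gcongr
        linarith
    _ = (S.growth : ℝ) ^ (57 * J + 3) * (g 1 1 : ℝ) ^ 2 := by ring
    _ ≤ (S.growth : ℝ) ^ (68 * J) * (g 1 1 : ℝ) ^ 2 := by
        gcongr
        exacts [S.one_le_growth, by lia]
    _ ≤ _ := hden

theorem IsRich.le_dni_of_mem_cylinders (hS : S.IsRich) (hg : IsAdmissible g) (hJ : 1 ≤ J)
    (hn₀ : 0 ≤ n) (hn : n ≤ (S.growth : ℝ) ^ (56 * J + 2) * (g 1 1 : ℝ) ^ 2) {δ : ℝ}
    (hmiss : ∀ l : List (Fin S.card), l.length = 68 * J →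
      ∃ x ∈ I, 1 / 2 ^ J < dni (n * moebius (g * S.word l) x - δ))
    {x : ℝ} (hx : x ∈ S.cylinders (64 * J)) (w : List.Vector (Fin S.card) (4 * J)) :
    1 / 2 ^ J / 2 ≤ dni (n * moebius (g * S.word w.toList) x - δ) := by
  obtain ⟨v, y, hy, rfl⟩ := mem_iUnion.1 hx
  have hlen : (w.toList ++ v.toList).length = 68 * J := by simp; lia
  obtain ⟨z, hz, hzδ⟩ := hmiss _ hlen
  rw [← moebius_mul_word (isAdmissible_mul_word hg _) _ hy.1, mul_assoc, ← word_append]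
  set k := g * S.word (w.toList ++ v.toList)
  have hdist : |(n * moebius k z - δ) - (n * moebius k y - δ)| ≤ 1 / 2 ^ J / 2 := by
    rw [sub_sub_sub_cancel_right, ← mul_sub, abs_mul, abs_of_nonneg hn₀]
    refine (mul_le_mul_of_nonneg_left ?_ hn₀).trans (hS.mul_one_div_den_sq_le hg hJ hn hlen)
    exact (isAdmissible_mul_word hg _).abs_moebius_sub_le hz hy
  linarith [dni_le_abs_sub_add (n * moebius k z - δ) (n * moebius k y - δ)]

theorem le_of_second_moment_le {W q Z C : ℝ} (hW : 0 < W) (hq : 0 < q) (hC : 0 ≤ C) (hZ : 0 ≤ Z)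
    (hWq : W ≤ 4 * q ^ 2) (hqW : q ^ 33 ≤ W ^ 17)
    (h : W ^ 16 / (4 * (q ^ 16) ^ 2) * (W ^ 2 / 4) ≤ 4 * Z * (W + W ^ 2 * (C / q ^ 2))) :
    q ≤ 64 * (1 + 4 * C) * Z := by
  have hdecay : W ^ 2 * (C / q ^ 2) ≤ W * (4 * C) := by
    rw [mul_div_assoc', div_le_iff₀ (by positivity)]
    linarith [mul_le_mul_of_nonneg_left hWq (by positivity : 0 ≤ W * C)]
  have hpow : W ^ 17 / (16 * q ^ 32) ≤ 4 * Z * (1 + 4 * C) := by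
    refine le_of_mul_le_mul_left ?_ hW
    calc W * (W ^ 17 / (16 * q ^ 32)) = W ^ 16 / (4 * (q ^ 16) ^ 2) * (W ^ 2 / 4) := by ring
      _ ≤ 4 * Z * (W + W * (4 * C)) := h.trans (by gcongr)
      _ = W * (4 * Z * (1 + 4 * C)) := by ring
  rw [div_le_iff₀ (by positivity)] at hpow
  refine le_of_mul_le_mul_right ?_ (pow_pos hq 32)
  linarith

theorem norm_integral_Icc_fourierChar_vector_sub_le (hg : IsAdmissible g) {n : ℕ}
    (hn : S.growth ^ (56 * J) * g 1 1 ^ 2 ≤ n) {h : ℤ} (h₀ : h ≠ 0)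
    {v w : List.Vector (Fin S.card) (4 * J)} (hvw : v ≠ w) :
    ‖∫ x in I, (𝐞 (h * (n * moebius (g * S.word v.toList) x
      - n * moebius (g * S.word w.toList) x)) : ℂ)‖ ≤
      S.decayConst / ((S.growth : ℝ) ^ (4 * J)) ^ 2 := by
  rw [integral_Icc_eq_integral_Ioc, ← intervalIntegral.integral_of_le zero_le_one]
  simp only [← mul_sub, ← mul_assoc]
  refine norm_integral_fourierChar_word_sub_le hg v.toList_length w.toList_length
    (fun h ↦ hvw (Subtype.ext h)) ?_
  have hn_real : ((S.growth : ℝ) ^ (4 * J)) ^ 14 * (g 1 1 : ℝ) ^ 2 ≤ n := by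
    rw [← pow_mul, mul_right_comm]
    exact_mod_cast hn
  rw [abs_mul, Nat.abs_cast]
  exact hn_real.trans (le_mul_of_one_le_left n.cast_nonneg (by exact_mod_cast Int.one_le_abs h₀))

/-- If no word of length `68 J` hits `δ`, then the functions `n * moebius (g * S.word w)`, over
words `w` of length `4 J`, all miss `δ` on all cylinders of generation `64 J`. -/
theorem IsRich.second_moment_le (hS : S.IsRich) (hg : IsAdmissible g) (hJ : 1 ≤ J) {n : ℕ}
    (hn : S.growth ^ (56 * J) * g 1 1 ^ 2 ≤ n) (hn' : n ≤ S.growth ^ (56 * J + 2) * g 1 1 ^ 2)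
    {δ : ℝ} (hmiss : ∀ l : List (Fin S.card), l.length = 68 * J →
      ∃ x ∈ I, 1 / 2 ^ J < dni (n * moebius (g * S.word l) x - δ)) :
    ((S.card : ℝ) ^ (4 * J)) ^ 16 / (4 * (((S.growth : ℝ) ^ (4 * J)) ^ 16) ^ 2) *
        (((S.card : ℝ) ^ (4 * J)) ^ 2 / 4) ≤
      4 * 2 ^ (4 * J) * ((S.card : ℝ) ^ (4 * J) + ((S.card : ℝ) ^ (4 * J)) ^ 2 *
        (S.decayConst / ((S.growth : ℝ) ^ (4 * J)) ^ 2)) := by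
  have hprob : IsProbabilityMeasure (volume.restrict I) := ⟨by simp⟩
  have hC := S.decayConst_pos
  have hmoment := measureReal_mul_card_sq_le (volume.restrict I)
    (f := fun (w : List.Vector (Fin S.card) (4 * J)) x ↦ n * moebius (g * S.word w.toList) x)
    (fun w ↦ by unfold moebius; fun_prop) (measurableSet_cylinders (S := S) (m := 64 * J))
    (H := 2 ^ (2 * J + 1)) (η := 1 / 2 ^ J / 2) (by positivity)
    (le_of_eq (by push_cast; field_simp; ring)) (by positivity)
    (fun x hx w ↦ hS.le_dni_of_mem_cylinders hg hJ n.cast_nonneg (by exact_mod_cast hn') hmiss hx w)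
    fun h h₀ v w hvw ↦ norm_integral_Icc_fourierChar_vector_sub_le hg hn h₀ hvw
  have hvol := card_pow_div_le_volume_cylinders (S := S) (m := 64 * J)
  rw [measureReal_restrict_apply measurableSet_cylinders,
    inter_eq_self_of_subset_left cylinders_subset, card_vector, Fintype.card_fin] at hmoment
  push_cast at hmoment
  rw [← pow_mul, ← pow_mul _ _ 16, show 4 * J * 16 = 64 * J by ring]
  exact (mul_le_mul_of_nonneg_right hvol (by positivity)).trans (hmoment.trans_eq (by ring))

/-- If `n` is large compared with the denominator of `g`, then every residue `δ` is approached
by `n x` on the whole image of some word appended to `g`. -/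
theorem IsRich.exists_forall_dni_le (hS : S.IsRich) :
    ∃ J₀, ∀ J ≥ J₀, ∀ g, IsAdmissible g → ∀ n : ℕ,
      S.growth ^ (56 * J) * g 1 1 ^ 2 ≤ n → n ≤ S.growth ^ (56 * J + 2) * g 1 1 ^ 2 → ∀ δ : ℝ,
      ∃ l : List (Fin S.card), l.length = 68 * J ∧
        ∀ x ∈ I, dni (n * moebius (g * S.word l) x - δ) ≤ 1 / 2 ^ J := by
  obtain ⟨J₀, hJ₀⟩ := exists_nat_gt (64 * (1 + 4 * S.decayConst))
  refine ⟨J₀ + 1, fun J hJ g hg n hn hn' δ ↦ ?_⟩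
  by_contra! hmiss
  have hQ : (4 : ℝ) ≤ S.growth := by exact_mod_cast S.four_le_growth
  have hM : (2 : ℝ) ≤ S.card := by exact_mod_cast S.two_le_card
  have hpow : ((S.growth : ℝ) ^ (4 * J)) ^ 33 ≤ ((S.card : ℝ) ^ (4 * J)) ^ 17 := by
    rw [pow_right_comm, pow_right_comm _ _ 17]
    exact pow_le_pow_left₀ (by positivity) (by exact_mod_cast hS.growth_pow_le) _
  have hle : (S.growth : ℝ) ^ (4 * J) ≤ 64 * (1 + 4 * S.decayConst) * 2 ^ (4 * J) :=
    le_of_second_moment_le (by positivity) (by positivity) S.decayConst_pos.le (by positivity)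
      (S.card_pow_le _) hpow (hS.second_moment_le hg (by lia) hn hn' hmiss)
  have hsq : (2 : ℝ) ^ (4 * J) * 2 ^ (4 * J) ≤ S.growth ^ (4 * J) := by
    rw [← mul_pow]
    gcongr
    linarith
  have hbound : (2 : ℝ) ^ (4 * J) ≤ 64 * (1 + 4 * S.decayConst) :=
    le_of_mul_le_mul_right (hsq.trans hle) (by positivity)
  have hJ_le : (J : ℝ) ≤ 2 ^ (4 * J) := by
    exact_mod_cast (Nat.le_mul_of_pos_left J (by simp)).trans Nat.lt_two_pow_self.le
  have : (J₀ : ℝ) + 1 ≤ J := by exact_mod_cast hJ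
  linarith

end MoebiusSystem

/-! ### Counting coprime pairs -/

/-- The pairs `(p, q)` of coprime integers with `0 < p ≤ K < q ≤ 2 K`. -/
def coprimePairs (K : ℕ) : Finset (ℕ × ℕ) :=
  {p ∈ Finset.Ioc 0 K ×ˢ Finset.Ioc K (2 * K) | p.1.Coprime p.2}

theorem card_filter_dvd_Ioc_two_mul_le (K : ℕ) {d : ℕ} (hd : 0 < d) :
    ({x ∈ Finset.Ioc K (2 * K) | d ∣ x} : Finset ℕ).card ≤ K / d + 1 := by
  have hunion : Finset.Ioc 0 K ∪ Finset.Ioc K (2 * K) = Finset.Ioc 0 (2 * K) :=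
    Finset.Ioc_union_Ioc_eq_Ioc (Nat.zero_le K) (by lia)
  have hcard : 2 * K / d = K / d + ({x ∈ Finset.Ioc K (2 * K) | d ∣ x} : Finset ℕ).card := by
    rw [← Nat.Ioc_filter_dvd_card_eq_div (2 * K), ← Nat.Ioc_filter_dvd_card_eq_div K, ← hunion,
      Finset.filter_union, Finset.card_union_of_disjoint]
    exact Finset.disjoint_filter_filter (Finset.Ioc_disjoint_Ioc_of_le le_rfl)
  have hdiv : 2 * K / d < 2 * (K / d) + 2 := by
    rw [Nat.div_lt_iff_lt_mul hd]
    linarith [Nat.lt_div_mul_add (a := K) hd]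
  lia

theorem card_not_coprime_le (K : ℕ) :
    (({p ∈ Finset.Ioc 0 K ×ˢ Finset.Ioc K (2 * K) | ¬p.1.Coprime p.2} : Finset _).card : ℝ) ≤
      K ^ 2 * ∑ d ∈ Finset.Ioc 1 K, ((d : ℝ) ^ 2)⁻¹ + K * ∑ d ∈ Finset.Ioc 1 K, (d : ℝ)⁻¹ := by
  have hsub : ({p ∈ Finset.Ioc 0 K ×ˢ Finset.Ioc K (2 * K) | ¬p.1.Coprime p.2} : Finset _) ⊆
      (Finset.Ioc 1 K).biUnion fun d ↦
        {x ∈ Finset.Ioc 0 K | d ∣ x} ×ˢ {x ∈ Finset.Ioc K (2 * K) | d ∣ x} := by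
    rintro ⟨p, q⟩ hpq
    obtain ⟨⟨hp, hq⟩, hgcd⟩ := by simpa only [Finset.mem_filter, Finset.mem_product] using hpq
    have hp' := Finset.mem_Ioc.1 hp
    have hpos := Nat.gcd_pos_of_pos_left q hp'.1
    simp only [Finset.mem_biUnion, Finset.mem_product, Finset.mem_filter]
    exact ⟨p.gcd q, Finset.mem_Ioc.2 ⟨by unfold Nat.Coprime at hgcd; lia,
      (Nat.gcd_le_left q hp'.1).trans hp'.2⟩, ⟨hp, Nat.gcd_dvd_left p q⟩, hq, Nat.gcd_dvd_right p q⟩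
  have hcard := (Finset.card_le_card hsub).trans Finset.card_biUnion_le
  rw [← Nat.cast_le (α := ℝ), Nat.cast_sum] at hcard
  refine hcard.trans ?_
  rw [Finset.mul_sum, Finset.mul_sum, ← Finset.sum_add_distrib]
  refine Finset.sum_le_sum fun d hd ↦ ?_
  have hd₀ : 0 < d := by have := Finset.mem_Ioc.1 hd; lia
  have hmult := card_filter_dvd_Ioc_two_mul_le K hd₀
  rw [← Nat.cast_le (α := ℝ)] at hmult
  rw [Finset.card_product, Nat.Ioc_filter_dvd_card_eq_div, Nat.cast_mul]
  calc _ ≤ ((K / d : ℕ) : ℝ) * ((K / d + 1 : ℕ) : ℝ) := by gcongr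
    _ ≤ (K : ℝ) / d * ((K : ℝ) / d + 1) := by
        push_cast
        gcongr <;> exact Nat.cast_div_le
    _ = K ^ 2 * ((d : ℝ) ^ 2)⁻¹ + K * (d : ℝ)⁻¹ := by field_simp

theorem sum_Ioc_one_inv_sq_le {K : ℕ} (hK : 2 ≤ K) :
    ∑ d ∈ Finset.Ioc 1 K, ((d : ℝ) ^ 2)⁻¹ ≤ 3 / 4 := by
  have htail := sum_Ioc_inv_sq_le_sub (α := ℝ) two_ne_zero hK
  rw [← Finset.sum_Ioc_consecutive _ one_le_two hK,
    show Finset.Ioc 1 2 = {2} by rfl, Finset.sum_singleton]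
  have : (0 : ℝ) ≤ (K : ℝ)⁻¹ := by positivity
  norm_num at htail ⊢
  linarith

theorem sum_Ioc_one_inv_le_log (K : ℕ) : ∑ d ∈ Finset.Ioc 1 K, (d : ℝ)⁻¹ ≤ log K := by
  obtain rfl | hK := K.eq_zero_or_pos
  · simp
  have h := harmonic_le_one_add_log K
  rw [harmonic_eq_sum_Icc, ← Finset.add_sum_Ioc_eq_sum_Icc hK] at h
  push_cast at h
  norm_num at h
  linarith

theorem eventually_sq_div_eight_le_card_coprimePairs :
    ∀ᶠ K : ℕ in atTop, (K : ℝ) ^ 2 / 8 ≤ (coprimePairs K).card := by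
  have hlog : ∀ᶠ K : ℕ in atTop, log K ≤ 1 / 8 * K := by
    filter_upwards [(isLittleO_log_id_atTop.comp_tendsto tendsto_natCast_atTop_atTop).bound
      (by norm_num : (0 : ℝ) < 1 / 8)] with K hK
    exact (le_abs_self _).trans (by simpa using hK)
  filter_upwards [hlog, eventually_ge_atTop 2] with K hK hK₂
  have hsplit := Finset.card_filter_add_card_filter_not
    (s := Finset.Ioc 0 K ×ˢ Finset.Ioc K (2 * K)) fun p ↦ p.1.Coprime p.2
  rw [Finset.card_product, Nat.card_Ioc, Nat.card_Ioc, Nat.sub_zero, two_mul,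
    Nat.add_sub_cancel, ← two_mul, ← Nat.cast_inj (R := ℝ)] at hsplit
  push_cast at hsplit
  have hsq := mul_le_mul_of_nonneg_left (sum_Ioc_one_inv_sq_le hK₂) (sq_nonneg (K : ℝ))
  have hlin := mul_le_mul_of_nonneg_left ((sum_Ioc_one_inv_le_log K).trans hK) K.cast_nonneg
  have hnot := card_not_coprime_le K
  rw [coprimePairs]
  linarith

/-! ### Rich systems from Farey neighbours -/

/-- The generator built from Farey neighbours `p / q` and `b / a`: the product
`!![0, 1; 1, 8] * !![p, b; q, a] * !![1, 8; 0, 1]`. Its Möbius map sends the unit interval close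
to `1 / (8 + p / q)`. -/
def fareyGen (p q a b : ℕ) : Matrix (Fin 2) (Fin 2) ℕ :=
  !![q, a + 8 * q; p + 8 * q, b + 8 * (a + p) + 64 * q]

/-- The matrix `!![p, b; q, a]` has determinant `-1`, its largest entry is `q`, and `q` is of
order `K`. The condition is invariant under exchanging `p` and `a`. -/
structure IsFareyMatrix (K p q a b : ℕ) : Prop where
  lt_q : K < q
  q_le : q ≤ 2 * K
  det_eq : q * b = p * a + 1
  p_lt : p < q
  a_lt : a < q
  b_le_p : b ≤ p
  b_le_a : b ≤ a

theorem fareyGen_transpose (p q a b : ℕ) : (fareyGen p q a b)ᵀ = fareyGen a q p b := by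
  rw [fareyGen, fareyGen, add_comm p a]
  ext i j
  fin_cases i <;> fin_cases j <;> rfl

theorem exists_isFareyMatrix {K : ℕ} {x : ℕ × ℕ} (hx : x ∈ coprimePairs K) :
    ∃ a b, IsFareyMatrix K x.1 x.2 a b := by
  obtain ⟨p, q⟩ := x
  obtain ⟨⟨⟨hp, hpK⟩, hKq, hqK⟩, hcop⟩ : ((0 < p ∧ p ≤ K) ∧ K < q ∧ q ≤ 2 * K) ∧ p.Coprime q := by
    simpa only [coprimePairs, Finset.mem_filter, Finset.mem_product, Finset.mem_Ioc] using hx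
  have : NeZero q := ⟨by lia⟩
  set a := (-(p : ZMod q)⁻¹).val with ha
  have haq : a < q := ZMod.val_lt _
  obtain ⟨b, hb⟩ : q ∣ p * a + 1 := by
    rw [← ZMod.natCast_eq_zero_iff, ha]
    push_cast
    rw [ZMod.natCast_zmod_val, mul_neg, ZMod.coe_mul_inv_eq_one p hcop, neg_add_cancel]
  have ha₀ : 0 < a := by
    refine Nat.pos_of_ne_zero fun h₀ ↦ ?_
    have := Nat.le_of_dvd one_pos (⟨b, by simpa [h₀] using hb⟩ : q ∣ 1)
    lia
  exact ⟨a, b, hKq, hqK, hb.symm, by lia, haq, by nlinarith, by nlinarith⟩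

namespace IsFareyMatrix

variable {K p q a b p' q' a' b' : ℕ} {x y : ℝ}

theorem symm (h : IsFareyMatrix K p q a b) : IsFareyMatrix K a q p b where
  lt_q := h.lt_q
  q_le := h.q_le
  det_eq := h.det_eq.trans (by rw [mul_comm])
  p_lt := h.a_lt
  a_lt := h.p_lt
  b_le_p := h.b_le_a
  b_le_a := h.b_le_p

theorem isGenerator (h : IsFareyMatrix K p q a b) : IsGenerator (fareyGen p q a b) where
  det_eq := by
    simp only [fareyGen, Matrix.of_apply, Matrix.cons_val]
    linarith [h.det_eq]
  bottom_le := by simp only [fareyGen, Matrix.of_apply, Matrix.cons_val]; lia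
  top_le := by simp only [fareyGen, Matrix.of_apply, Matrix.cons_val]; lia
  left_le := by simp only [fareyGen, Matrix.of_apply, Matrix.cons_val]; lia
  right_le := by simp only [fareyGen, Matrix.of_apply, Matrix.cons_val]; lia

theorem le_den (h : IsFareyMatrix K p q a b) : K ≤ fareyGen p q a b 1 1 := by
  have := h.lt_q
  simp only [fareyGen, Matrix.of_apply, Matrix.cons_val]
  lia

theorem two_mul_den_le (h : IsFareyMatrix K p q a b) : 2 * fareyGen p q a b 1 1 ≤ 324 * K := by
  have := h.q_le
  have := h.p_lt
  have := h.a_lt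
  have := h.b_le_p
  simp only [fareyGen, Matrix.of_apply, Matrix.cons_val]
  lia

theorem coprime (h : IsFareyMatrix K p q a b) : p.Coprime q :=
  Nat.dvd_one.1 ((Nat.dvd_add_right ((p.gcd_dvd_left q).mul_right a)).1
    (h.det_eq ▸ (p.gcd_dvd_right q).mul_right b))

theorem eq_of_mul_eq_mul (h : IsFareyMatrix K p q a b) (h' : IsFareyMatrix K p' q' a' b')
    (hpq : p * q' = p' * q) : p = p' ∧ q = q' ∧ a = a' := by
  obtain rfl : q = q' := Nat.dvd_antisymm
    (h.coprime.symm.dvd_of_dvd_mul_left (hpq ▸ dvd_mul_left q p'))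
    (h'.coprime.symm.dvd_of_dvd_mul_left (hpq ▸ dvd_mul_left q' p))
  obtain rfl : p = p' := Nat.eq_of_mul_eq_mul_right (by linarith [h.p_lt]) hpq
  refine ⟨rfl, rfl, ?_⟩
  have hdvd : (q : ℤ) ∣ p * (a - a') :=
    ⟨b - b', by have := h.det_eq; have := h'.det_eq; zify at *; linarith⟩
  have hzero := Int.eq_zero_of_abs_lt_dvd
    ((Nat.isCoprime_iff_coprime.2 h.coprime.symm).dvd_of_dvd_mul_left hdvd)
    (by have := h.a_lt; have := h'.a_lt; rw [abs_lt]; lia)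
  lia

theorem exists_moebius_eq (h : IsFareyMatrix K p q a b) (hK : 0 < K) (hx : 0 ≤ x) :
    ∃ u ∈ I, moebius (fareyGen p q a b) x = 1 / (8 + u) ∧
      u - p / q ∈ Icc 0 (1 / (8 * (K : ℝ) ^ 2)) := by
  have hK₀ : (0 : ℝ) < K := by exact_mod_cast hK
  have hq : (K : ℝ) < q := by exact_mod_cast h.lt_q
  have hq₀ : (0 : ℝ) < q := hK₀.trans hq
  have hdet : (q : ℝ) * b = p * a + 1 := by exact_mod_cast h.det_eq
  have hp : (p : ℝ) ≤ q := by exact_mod_cast h.p_lt.le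
  have hb : (b : ℝ) ≤ a := by exact_mod_cast h.b_le_a
  have hden : 0 < q * (8 + x) + a := by positivity
  have hsub : (p * (8 + x) + b) / (q * (8 + x) + a) - p / q = 1 / (q * (q * (8 + x) + a)) := by
    rw [div_sub_div _ _ hden.ne' hq₀.ne', div_eq_div_iff (by positivity) (by positivity)]
    linear_combination (q * (q * (8 + x) + a)) * hdet
  refine ⟨(p * (8 + x) + b) / (q * (8 + x) + a), ⟨by positivity, ?_⟩, ?_, ?_⟩
  · rw [div_le_one hden]
    gcongr
  · have : 8 + (p * (8 + x) + b) / (q * (8 + x) + a) =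
        ((p + 8 * q) * x + (b + 8 * (a + p) + 64 * q)) / (q * (8 + x) + a) := by
      field_simp
      ring
    rw [this, one_div_div]
    simp only [moebius, fareyGen, Matrix.of_apply, Matrix.cons_val]
    push_cast
    ring_nf
  · rw [hsub]
    refine ⟨by positivity, one_div_le_one_div_of_le (by positivity) ?_⟩
    calc 8 * (K : ℝ) ^ 2 = K * (K * (8 + 0) + 0) := by ring
      _ ≤ q * (q * (8 + x) + a) := by gcongr; positivity

theorem le_abs_div_sub_div (h : IsFareyMatrix K p q a b) (h' : IsFareyMatrix K p' q' a' b')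
    (hK : 0 < K) (hpq : p * q' ≠ p' * q) :
    1 / (4 * (K : ℝ) ^ 2) ≤ |(p : ℝ) / q - p' / q'| := by
  have hq₀ : (0 : ℝ) < q := by exact_mod_cast hK.trans h.lt_q
  have hq₀' : (0 : ℝ) < q' := by exact_mod_cast hK.trans h'.lt_q
  have hq : (q : ℝ) ≤ 2 * K := by exact_mod_cast h.q_le
  have hq' : (q' : ℝ) ≤ 2 * K := by exact_mod_cast h'.q_le
  have hnum : (1 : ℝ) ≤ |(p : ℝ) * q' - q * p'| := by
    have : (p : ℤ) * q' - q * p' ≠ 0 := by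
      rw [sub_ne_zero, mul_comm (q : ℤ)]
      exact_mod_cast hpq
    exact_mod_cast Int.one_le_abs this
  rw [div_sub_div _ _ hq₀.ne' hq₀'.ne', abs_div, abs_of_pos (mul_pos hq₀ hq₀')]
  calc 1 / (4 * (K : ℝ) ^ 2) = 1 / (2 * K * (2 * K)) := by ring
    _ ≤ _ := by gcongr

theorem le_abs_moebius_sub (h : IsFareyMatrix K p q a b) (h' : IsFareyMatrix K p' q' a' b')
    (hK : 0 < K) (hpq : p * q' ≠ p' * q) (hx : 0 ≤ x) (hy : 0 ≤ y) :
    1 / (648 * (K : ℝ) ^ 2) ≤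
      |moebius (fareyGen p q a b) x - moebius (fareyGen p' q' a' b') y| := by
  obtain ⟨u, ⟨hu₀, hu₁⟩, hu, hup⟩ := h.exists_moebius_eq hK hx
  obtain ⟨v, ⟨hv₀, hv₁⟩, hv, hvp⟩ := h'.exists_moebius_eq hK hy
  have : (0 : ℝ) < K := by exact_mod_cast hK
  have huv : 1 / (8 * (K : ℝ) ^ 2) ≤ |u - v| := by
    have hgap := h.le_abs_div_sub_div h' hK hpq
    have herr : |(u - p / q) - (v - p' / q')| ≤ 1 / (8 * (K : ℝ) ^ 2) :=
      (abs_sub_le_of_nonneg_of_le hup.1 hup.2 hvp.1 hvp.2)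
    have htri := abs_sub_abs_le_abs_sub ((p : ℝ) / q - p' / q') (-((u - p / q) - (v - p' / q')))
    rw [abs_neg, show (p : ℝ) / q - p' / q' - -((u - p / q) - (v - p' / q')) = u - v by ring]
      at htri
    rw [show 1 / (4 * (K : ℝ) ^ 2) = 2 * (1 / (8 * (K : ℝ) ^ 2)) by ring] at hgap
    linarith
  rw [hu, hv, div_sub_div _ _ (by positivity) (by positivity), abs_div,
    abs_of_pos (by positivity : 0 < (8 + u) * (8 + v)), one_mul, mul_one, add_sub_add_left_eq_sub,
    abs_sub_comm]
  calc 1 / (648 * (K : ℝ) ^ 2) = (1 / (8 * (K : ℝ) ^ 2)) / ((8 + 1) * (8 + 1)) := by ring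
    _ ≤ _ := by gcongr

end IsFareyMatrix

theorem exists_moebiusSystem_of_coprimePairs {K : ℕ} (hK : 2 ≤ K)
    (hcard : 2 ≤ (coprimePairs K).card) :
    ∃ S : MoebiusSystem, S.card = (coprimePairs K).card ∧ S.minDen = K ∧ S.growth = 324 * K := by
  have hK₀ : 0 < K := by lia
  choose a b hab using fun x : coprimePairs K ↦ exists_isFareyMatrix x.2
  set e := (coprimePairs K).equivFin
  have hgen (i) := hab (e.symm i)
  have hinj {i j} (hij : i ≠ j) (h₁ : (e.symm i).1.1 = (e.symm j).1.1)
      (h₂ : (e.symm i).1.2 = (e.symm j).1.2) : False :=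
    hij (e.symm.injective (Subtype.ext (Prod.ext h₁ h₂)))
  exact ⟨{
    card := (coprimePairs K).card
    minDen := K
    growth := 324 * K
    gap := 1 / (648 * (K : ℝ) ^ 2)
    gen i := fareyGen (e.symm i).1.1 (e.symm i).1.2 (a (e.symm i)) (b (e.symm i))
    two_le_card := hcard
    two_le_minDen := hK
    gap_pos := by positivity
    isGenerator i := (hgen i).isGenerator
    minDen_le i := (hgen i).le_den
    two_mul_den_le i := (hgen i).two_mul_den_le
    gap_le i j hij x hx y hy := (hgen i).le_abs_moebius_sub (hgen j) hK₀
      (fun heq ↦ let ⟨h₁, h₂, _⟩ := (hgen i).eq_of_mul_eq_mul (hgen j) heq; hinj hij h₁ h₂)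
      hx.1 hy.1
    gap_le_transpose i j hij x hx y hy := by
      rw [fareyGen_transpose, fareyGen_transpose]
      refine (hgen i).symm.le_abs_moebius_sub (hgen j).symm hK₀ (fun heq ↦ ?_) hx.1 hy.1
      obtain ⟨-, h₂, h₁⟩ := (hgen i).symm.eq_of_mul_eq_mul (hgen j).symm heq
      exact hinj hij h₁ h₂ }, rfl, rfl, rfl⟩

theorem MoebiusSystem.exists_isRich {s : ℝ} (hs : s < 1) :
    ∃ S : MoebiusSystem, S.IsRich ∧ (S.growth : ℝ) ^ (2 * s) ≤ S.card := by
  have hlim : ∀ᶠ K : ℕ in atTop, (8 * 324 ^ 2 : ℝ) ≤ (K : ℝ) ^ (2 - 2 * s) :=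
    ((tendsto_rpow_atTop (by linarith)).comp tendsto_natCast_atTop_atTop).eventually_ge_atTop _
  obtain ⟨K, hcard, hK, hKs⟩ := (eventually_sq_div_eight_le_card_coprimePairs.and
    ((eventually_ge_atTop (324 ^ 33 * 8 ^ 17)).and hlim)).exists
  have hcard' : K ^ 2 ≤ 8 * (coprimePairs K).card := by
    have : (K : ℝ) ^ 2 ≤ 8 * (coprimePairs K).card := by linarith
    exact_mod_cast this
  obtain ⟨S, hScard, hSden, hSgrowth⟩ := exists_moebiusSystem_of_coprimePairs (K := K) (by lia)
    (by nlinarith)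
  have hK₀ : (0 : ℝ) < K := by exact_mod_cast (by lia : 0 < K)
  refine ⟨S, ⟨?_, ?_⟩, ?_⟩
  · rw [hSgrowth, hSden, sq]
    exact Nat.mul_le_mul_right K (by lia)
  · rw [hSgrowth, hScard]
    refine Nat.le_of_mul_le_mul_left ?_ (pow_pos (by norm_num : 0 < 8) 17)
    calc 8 ^ 17 * (324 * K) ^ 33 = (324 ^ 33 * 8 ^ 17) * K ^ 33 := by rw [mul_pow]; ring
      _ ≤ K * K ^ 33 := Nat.mul_le_mul_right _ hK
      _ = (K ^ 2) ^ 17 := by ring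
      _ ≤ (8 * (coprimePairs K).card) ^ 17 := Nat.pow_le_pow_left hcard' 17
      _ = 8 ^ 17 * (coprimePairs K).card ^ 17 := mul_pow _ _ _
  · rw [hSgrowth, hScard]
    push_cast
    calc (324 * (K : ℝ)) ^ (2 * s) = (324 : ℝ) ^ (2 * s) * (K : ℝ) ^ (2 * s) :=
          mul_rpow (by norm_num) hK₀.le
      _ ≤ 324 ^ (2 : ℝ) * (K : ℝ) ^ (2 * s) := by
          gcongr
          exacts [by norm_num, by linarith]
      _ = (K : ℝ) ^ (2 * s) * (8 * 324 ^ 2) / 8 := by rw [rpow_two]; ring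
      _ ≤ (K : ℝ) ^ (2 * s) * (K : ℝ) ^ (2 - 2 * s) / 8 := by gcongr
      _ = (K : ℝ) ^ 2 / 8 := by rw [← rpow_add hK₀, add_sub_cancel, rpow_two]
      _ ≤ (coprimePairs K).card := hcard

/-! ### Inhomogeneous approximation along convergents -/

theorem exists_int_contsAux_eq (v : ℝ) (n : ℕ) :
    ∃ a b : ℤ, (GenContFract.of v).contsAux n = ⟨(a : ℝ), (b : ℝ)⟩ := by
  induction n using Nat.twoStepInduction with
  | zero => exact ⟨1, 0, by simp [GenContFract.contsAux]⟩
  | one => exact ⟨⌊v⌋, 1, by simp [GenContFract.contsAux, GenContFract.of_h_eq_floor]⟩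
  | more n ih ih' =>
    obtain ⟨a, b, hab⟩ := ih
    obtain ⟨a', b', hab'⟩ := ih'
    rcases h : (GenContFract.of v).s.get? n with _ | gp
    · exact ⟨a', b', (GenContFract.contsAux_stable_step_of_terminated h).trans hab'⟩
    · obtain ⟨hnum, z, hden⟩ := GenContFract.of_partNum_eq_one_and_exists_int_partDen_eq h
      refine ⟨z * a' + a, z * b' + b, ?_⟩
      rw [GenContFract.contsAux_recurrence h hab hab', hnum, hden]
      push_cast
      simp only [one_mul]

theorem exists_int_nums_dens_eq (v : ℝ) (t : ℕ) :
    ∃ p q : ℤ, (GenContFract.of v).nums t = p ∧ (GenContFract.of v).dens t = q := by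
  obtain ⟨p, q, h⟩ := exists_int_contsAux_eq v (t + 1)
  rw [← GenContFract.nth_cont_eq_succ_nth_contAux] at h
  exact ⟨p, q, by rw [GenContFract.num_eq_conts_a, h], by rw [GenContFract.den_eq_conts_b, h]⟩

theorem not_terminatedAt_of_irrational {α : ℝ} (hα : Irrational α) (t : ℕ) :
    ¬(GenContFract.of α).TerminatedAt t := fun h ↦
  let ⟨r, hr⟩ := (GenContFract.terminates_iff_rat α).1 ⟨t, h⟩
  hα ⟨r, hr.symm⟩

theorem exists_qden_eq_natCast {α : ℝ} (hα : Irrational α) (t : ℕ) :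
    ∃ (q : ℕ) (p : ℤ), qden α t = q ∧ Nat.fib (t + 1) ≤ q ∧ IsCoprime p q ∧
      |α - p / q| ≤ 1 / (q : ℝ) ^ 2 := by
  have hnt := not_terminatedAt_of_irrational hα
  obtain ⟨p, q, hp, hq⟩ := exists_int_nums_dens_eq α t
  obtain ⟨p', q', hp', hq'⟩ := exists_int_nums_dens_eq α (t + 1)
  have hfib : (Nat.fib (t + 1) : ℤ) ≤ q := by
    have := GenContFract.succ_nth_fib_le_of_nth_den (Or.inr (hnt (t - 1)))
    rw [hq] at this
    exact_mod_cast this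
  have hdet : p * q' - q * p' = (-1) ^ (t + 1) := by
    have := SimpContFract.determinant (s := SimpContFract.of α) (hnt t)
    change (GenContFract.of α).nums t * (GenContFract.of α).dens (t + 1) -
      (GenContFract.of α).dens t * (GenContFract.of α).nums (t + 1) = _ at this
    rw [hp, hq, hp', hq'] at this
    exact_mod_cast this
  have hmono : q ≤ q' := by
    have := GenContFract.of_den_mono (v := α) (n := t)
    rw [hq, hq'] at this
    exact_mod_cast this
  have happrox := GenContFract.abs_sub_convs_le (hnt t)
  rw [GenContFract.conv_eq_num_div_den, hp, hq, hq'] at happrox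
  lift q to ℕ using by lia
  rw [Int.cast_natCast] at happrox
  have : 0 < q := (Nat.fib_pos.2 t.succ_pos).trans_le (by lia)
  refine ⟨q, p, hq, by exact_mod_cast hfib,
    ⟨q' * (-1) ^ (t + 1), -p' * (-1) ^ (t + 1), ?_⟩, happrox.trans ?_⟩
  · have hsq : ((-1 : ℤ) ^ (t + 1)) ^ 2 = 1 := by rw [pow_right_comm, neg_one_sq, one_pow]
    linear_combination (-1) ^ (t + 1) * hdet + hsq
  · rw [sq]
    gcongr
    exact_mod_cast hmono

theorem exists_mul_dni_le {α : ℝ} (γ : ℝ) {q : ℕ} {p : ℤ} (hq : 0 < q) (hcop : IsCoprime p q)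
    (happrox : |α - p / q| ≤ 1 / (q : ℝ) ^ 2) :
    ∃ n : ℕ, q ≤ n ∧ n < 2 * q ∧ n * dni (n * α - γ) ≤ 5 := by
  have : (0 : ℝ) < q := by exact_mod_cast hq
  obtain ⟨m, hm⟩ : ∃ m : ℤ, |q * γ - m| ≤ 1 / 2 := ⟨_, abs_sub_round _⟩
  obtain ⟨n, z, hqn, hnq, hz⟩ : ∃ (n : ℕ) (z : ℤ), q ≤ n ∧ n < 2 * q ∧ n * p - m = q * z := by
    obtain ⟨x, y, hxy⟩ := hcop
    have hdiv := Int.emod_add_mul_ediv (m * x) q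
    have hlt := Int.emod_lt_of_pos (m * x) (Int.natCast_pos.2 hq)
    obtain ⟨r, hr⟩ := Int.eq_ofNat_of_zero_le (Int.emod_nonneg (m * x) (Int.natCast_pos.2 hq).ne')
    rw [hr] at hdiv hlt
    refine ⟨r + q, p - p * (m * x / q) - m * y, by lia, by lia, ?_⟩
    push_cast
    linear_combination p * hdiv + m * hxy
  refine ⟨n, hqn, hnq, ?_⟩
  have hn : (n : ℝ) ≤ 2 * q := by exact_mod_cast hnq.le
  have hsplit : n * α - γ - z = n * (α - p / q) - (q * γ - m) / q := by
    have : (n : ℝ) * p - m = q * z := by exact_mod_cast hz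
    field_simp
    linear_combination this
  have hmain : |n * (α - p / q)| ≤ 2 / q := by
    rw [abs_mul, Nat.abs_cast]
    calc (n : ℝ) * |α - p / q| ≤ 2 * q * (1 / (q : ℝ) ^ 2) := by gcongr
      _ = 2 / q := by field_simp
  have hround : |(q * γ - m) / q| ≤ 1 / 2 / q := by
    rw [abs_div, Nat.abs_cast]
    gcongr
  have hdni : dni (n * α - γ) ≤ 5 / 2 / q := calc
    dni (n * α - γ) ≤ |n * α - γ - z| := round_le _ _
    _ ≤ 2 / q + 1 / 2 / q := hsplit ▸ (abs_sub _ _).trans (add_le_add hmain hround)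
    _ = 5 / 2 / q := by ring
  calc n * dni (n * α - γ) ≤ 2 * q * (5 / 2 / q) := by
        gcongr
        exact dni_nonneg _
    _ = 5 := by field_simp

theorem two_pow_le_fib_two_mul_add_one (k : ℕ) : 2 ^ k ≤ Nat.fib (2 * k + 1) := by
  induction k with
  | zero => simp
  | succ k ih =>
    rw [pow_succ, mul_two, Nat.mul_succ, Nat.fib_add_two]
    exact add_le_add ih (ih.trans Nat.fib_le_fib_succ)

theorem exists_seq_mul_dni_le {α : ℝ} (hα : α ∈ KSet) (γ : ℝ) :
    ∃ c : ℕ, ∀ k : ℕ, ∃ n : ℕ, 2 ^ 2 ^ k ≤ n ∧ log n ≤ 2 ^ (c + k) ∧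
      n * dni (n * α - γ) ≤ 5 := by
  obtain ⟨hirr, C, hC⟩ := hα
  obtain ⟨c, hc⟩ := pow_unbounded_of_one_lt (2 * |C| + 1) one_lt_two
  refine ⟨c, fun k ↦ ?_⟩
  obtain ⟨q, p, hqden, hfib, hcop, happrox⟩ := exists_qden_eq_natCast hirr (2 * 2 ^ k)
  have hkq : 2 ^ 2 ^ k ≤ q := (two_pow_le_fib_two_mul_add_one (2 ^ k)).trans hfib
  have hq : 0 < q := (by positivity : 0 < 2 ^ 2 ^ k).trans_le hkq
  obtain ⟨n, hqn, hnq, hn⟩ := exists_mul_dni_le γ hq hcop happrox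
  refine ⟨n, hkq.trans hqn, ?_, hn⟩
  have hlogq : log q ≤ C * (2 * 2 ^ k) := by
    have := hC (2 * 2 ^ k) (Nat.one_le_iff_ne_zero.2 (by positivity))
    rw [hqden, div_le_iff₀ (by positivity)] at this
    exact_mod_cast this
  have hpow : (1 : ℝ) ≤ 2 ^ k := one_le_pow₀ one_le_two
  calc log n ≤ log (2 * q) :=
        log_le_log (by exact_mod_cast hq.trans_le hqn) (by exact_mod_cast hnq.le)
    _ = log 2 + log q := log_mul two_ne_zero (by exact_mod_cast hq.ne')
    _ ≤ 1 * 2 ^ k + |C| * (2 * 2 ^ k) := by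
        refine add_le_add (by linarith [log_two_lt_d9]) (hlogq.trans ?_)
        gcongr
        exact le_abs_self C
    _ = (2 * |C| + 1) * 2 ^ k := by ring
    _ ≤ 2 ^ (c + k) := by
        rw [pow_add]
        gcongr

/-! ### Badly approximable limit points -/

namespace IsAdmissible

variable {g : Matrix (Fin 2) (Fin 2) ℕ} {y : ℝ}

-- In the basis given by the rows of `g`, the vector `(a, b)` has coordinates `s` and `t` of
-- opposite signs as soon as `b` is smaller than the denominator of `g`.
theorem one_div_le_abs_mul_moebius_sub (hg : IsAdmissible g) (hy : y ∈ I) {b : ℕ} (hb : 0 < b)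
    (hbg : b < g 1 1) (a : ℤ) : 1 / (2 * g 1 1 : ℝ) ≤ |b * moebius g y - a| := by
  have hpos := hg.linear_pos hy.1
  obtain ⟨t, ht⟩ : ∃ t : ℤ, t = b * g 0 0 - a * g 1 0 := ⟨_, rfl⟩
  obtain ⟨s, hs⟩ : ∃ s : ℤ, s = a * g 1 1 - b * g 0 1 := ⟨_, rfl⟩
  have hst : (g 1 0 : ℤ) * s + g 1 1 * t = b := by
    have := hg.det_eq
    zify at this
    rw [ht, hs]
    linear_combination (b : ℤ) * this
  have hsub : b * moebius g y - a = (t * y - s) / (g 1 0 * y + g 1 1) := by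
    rw [ht, hs, moebius, eq_div_iff hpos.ne', sub_mul, mul_assoc, div_mul_cancel₀ _ hpos.ne']
    push_cast
    ring
  have hnum : 1 ≤ |t * y - s| := by
    have : (0 : ℤ) ≤ g 1 0 := by positivity
    rcases le_or_gt t 0 with ht₀ | ht₀
    · have hs₀ : 1 ≤ s := by
        by_contra! hs₀
        nlinarith
      have : (1 : ℝ) ≤ s := by exact_mod_cast hs₀
      have : (t : ℝ) * y ≤ 0 := mul_nonpos_of_nonpos_of_nonneg (by exact_mod_cast ht₀) hy.1
      exact le_abs.2 (.inr (by linarith))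
    · have hs₀ : s ≤ -1 := by
        by_contra! hs₀
        nlinarith
      have : (s : ℝ) ≤ -1 := by exact_mod_cast hs₀
      have : 0 ≤ (t : ℝ) * y := mul_nonneg (by exact_mod_cast ht₀.le) hy.1
      exact le_abs.2 (.inl (by linarith))
  rw [hsub, abs_div, abs_of_pos hpos]
  exact div_le_div₀ (abs_nonneg _) hnum hpos (hg.linear_le hy)

theorem den_mul_dni_le_one (hg : IsAdmissible g) (hy : y ∈ I) :
    g 1 1 * dni (g 1 1 * moebius g y) ≤ 1 := by
  have hpos := hg.linear_pos hy.1
  have hsub : g 1 1 * moebius g y - g 0 1 = y / (g 1 0 * y + g 1 1) := by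
    rw [moebius, eq_div_iff hpos.ne', sub_mul, mul_assoc, div_mul_cancel₀ _ hpos.ne']
    linear_combination y * hg.det_eq_real
  have hdni : dni (g 1 1 * moebius g y) ≤ y / (g 1 0 * y + g 1 1) := by
    rw [← abs_of_nonneg (div_nonneg hy.1 hpos.le), ← hsub]
    exact_mod_cast round_le (g 1 1 * moebius g y : ℝ) (g 0 1 : ℤ)
  calc g 1 1 * dni (g 1 1 * moebius g y) ≤ g 1 1 * (1 / g 1 1) := by
        gcongr
        exact hdni.trans (div_le_div₀ zero_le_one hy.2 (by linarith [hg.one_le_den])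
          (den_le_linear hy.1))
    _ = 1 := mul_one_div_cancel (by linarith [hg.one_le_den])

end IsAdmissible

namespace MoebiusSystem

variable (S : MoebiusSystem)

theorem exists_append_eq_of_lt_den {b : ℕ} (hb : 0 < b) (l : List (Fin S.card))
    (hbl : b < S.word l 1 1) :
    ∃ l₁ l₂, l = l₁ ++ l₂ ∧ b < S.word l₁ 1 1 ∧ S.word l₁ 1 1 ≤ S.growth * b := by
  induction l using List.reverseRecOn with
  | nil => simp only [word_nil, Matrix.one_apply_eq] at hbl; lia
  | append_singleton l i ih =>
    by_cases hlt : b < S.word l 1 1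
    · obtain ⟨l₁, l₂, rfl, hb₁, hl₁⟩ := ih hlt
      exact ⟨l₁, l₂ ++ [i], by rw [List.append_assoc], hb₁, hl₁⟩
    · refine ⟨l ++ [i], [], (List.append_nil _).symm, hbl, ?_⟩
      rw [word_append, word_cons, word_nil, mul_one]
      exact (den_mul_gen_le (isAdmissible_word l) i).trans
        (Nat.mul_le_mul_left _ (not_lt.1 hlt))

variable {S} {X : ℝ}

theorem one_div_le_mul_dni (hX : ∀ N, ∃ l, N < S.word l 1 1 ∧ ∃ y ∈ I, X = moebius (S.word l) y)
    {b : ℕ} (hb : 0 < b) : 1 / (2 * S.growth : ℝ) ≤ b * dni (b * X) := by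
  obtain ⟨l, hbl, y, hy, hXy⟩ := hX b
  obtain ⟨l₁, l₂, rfl, hb₁, hl₁⟩ := S.exists_append_eq_of_lt_den hb l hbl
  rw [word_append, moebius_mul_word (isAdmissible_word l₁) l₂ hy.1] at hXy
  have : (0 : ℝ) < b := by exact_mod_cast hb
  have hlow := (isAdmissible_word l₁).one_div_le_abs_mul_moebius_sub
    (mapsTo_moebius_word l₂ hy) hb hb₁ (round (b * X))
  rw [← hXy] at hlow
  have hl₁' : (S.word l₁ 1 1 : ℝ) ≤ S.growth * b := by exact_mod_cast hl₁
  have := (isAdmissible_word l₁).one_le_den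
  calc 1 / (2 * S.growth : ℝ) = b * (1 / (2 * (S.growth * b))) := by field_simp
    _ ≤ b * (1 / (2 * S.word l₁ 1 1)) := by gcongr
    _ ≤ b * dni (b * X) := by gcongr; exact hlow

theorem mem_Bad (hX : ∀ N, ∃ l, N < S.word l 1 1 ∧ ∃ y ∈ I, X = moebius (S.word l) y) :
    X ∈ Bad := by
  have hfreq : ∃ᶠ b : ℕ in atTop, b * dni (b * X) ≤ 1 := frequently_atTop.2 fun N ↦ by
    obtain ⟨l, hl, y, hy, rfl⟩ := hX N
    exact ⟨S.word l 1 1, hl.le, (isAdmissible_word l).den_mul_dni_le_one hy⟩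
  have hgrowth : (0 : ℝ) < 1 / (2 * S.growth : ℝ) := by
    have := S.one_le_growth
    positivity
  refine hgrowth.trans_le (le_liminf_of_le (IsCoboundedUnder.of_frequently_le hfreq) ?_)
  filter_upwards [eventually_gt_atTop 0] with b hb using one_div_le_mul_dni hX hb

end MoebiusSystem

/-! ### A Cantor set with prescribed hits -/

/-- The data of the Cantor construction: frequencies `freq i`, and for every word `l` whose
denominator `d` satisfies `growth ^ scale i * d ^ 2 ≈ freq i` a continuation `hit i l` after which
`freq i * x` is within `err i` of `target` modulo one. The frequencies grow so fast that the `i`-th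
hit comes after `lag` times as many free letters as there are forced letters up to it. -/
structure HittingScheme (S : MoebiusSystem) where
  freq : ℕ → ℕ
  scale : ℕ → ℕ
  len : ℕ → ℕ
  err : ℕ → ℝ
  target : ℝ
  lag : ℕ
  hit : ℕ → List (Fin S.card) → List (Fin S.card)
  length_hit {i : ℕ} {l : List (Fin S.card)} (hlow : S.growth ^ scale i * S.word l 1 1 ^ 2 ≤ freq i)
    (hup : freq i ≤ S.growth ^ (scale i + 2) * S.word l 1 1 ^ 2) : (hit i l).length = len i
  dni_hit_le {i : ℕ} {l : List (Fin S.card)} (hlow : S.growth ^ scale i * S.word l 1 1 ^ 2 ≤ freq i)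
    (hup : freq i ≤ S.growth ^ (scale i + 2) * S.word l 1 1 ^ 2) {x : ℝ} (hx : x ∈ I) :
    dni (freq i * moebius (S.word (l ++ hit i l)) x - target) ≤ err i
  mul_freq_le (i : ℕ) : S.growth ^ (scale (i + 1) + 2 * len i + 2) * freq i ≤ freq (i + 1)
  le_freq (i : ℕ) : S.growth ^ (scale i + 2 + 2 * lag * ∑ k ∈ Finset.range (i + 1), len k +
    2 * ∑ k ∈ Finset.range i, len k) ≤ freq i

/-- A stage of the Cantor construction: the word built so far and the number of hits made. -/
structure HittingStage (S : MoebiusSystem) where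
  word : List (Fin S.card)
  hits : ℕ

namespace HittingScheme

variable {S : MoebiusSystem} (H : HittingScheme S) (ω ω' : ℕ → Fin S.card)
  {p : HittingStage S} {k : ℕ}

/-- The total length of the first `i` forced words. -/
def forcedLen (i : ℕ) : ℕ := ∑ k ∈ Finset.range i, H.len k

/-- The word is long enough for the next forced word to be appended. -/
def IsDue (p : HittingStage S) : Prop :=
  H.freq p.hits ≤ S.growth ^ (H.scale p.hits + 2) * S.word p.word 1 1 ^ 2

/-- The word is not yet too long for the next forced word to be appended. -/
def IsEarly (p : HittingStage S) : Prop :=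
  S.growth ^ H.scale p.hits * S.word p.word 1 1 ^ 2 ≤ H.freq p.hits

open Classical in
/-- Appends the next forced word if it is due. -/
noncomputable def force (p : HittingStage S) : HittingStage S :=
  if H.IsDue p then ⟨p.word ++ H.hit p.hits p.word, p.hits + 1⟩ else p

/-- The stage reached after `k` free letters, prescribed by `ω`. -/
noncomputable def stage : ℕ → HittingStage S
  | 0 => ⟨[], 0⟩
  | k + 1 => ⟨(H.force (stage k)).word ++ [ω k], (H.force (stage k)).hits⟩

/-- The word consists of `k` free letters and the forced ones, and the latter are sparse. -/
structure IsPaced (k : ℕ) (p : HittingStage S) : Prop where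
  length_eq : p.word.length = k + H.forcedLen p.hits
  lag_mul_le : H.lag * H.forcedLen p.hits ≤ k

variable {H}

theorem force_of_isDue (hp : H.IsDue p) :
    H.force p = ⟨p.word ++ H.hit p.hits p.word, p.hits + 1⟩ := if_pos hp

theorem force_of_not_isDue (hp : ¬H.IsDue p) : H.force p = p := if_neg hp

theorem forcedLen_succ (i : ℕ) : H.forcedLen (i + 1) = H.forcedLen i + H.len i :=
  Finset.sum_range_succ _ _

theorem den_word_append_le (l l' : List (Fin S.card)) :
    S.word (l ++ l') 1 1 ≤ S.growth ^ l'.length * S.word l 1 1 := by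
  rw [MoebiusSystem.word_append]
  exact MoebiusSystem.den_mul_word_le (MoebiusSystem.isAdmissible_word l) l'

theorem IsEarly.snoc_force (hp : H.IsEarly p) (a : Fin S.card) :
    H.IsEarly ⟨(H.force p).word ++ [a], (H.force p).hits⟩ := by
  have hgrowth : 0 < S.growth := by linarith [S.four_le_growth]
  unfold IsEarly at hp ⊢
  by_cases hdue : H.IsDue p
  · rw [force_of_isDue hdue]
    have hden := den_word_append_le p.word (H.hit p.hits p.word ++ [a])
    rw [← List.append_assoc, List.length_append, H.length_hit hp hdue, List.length_singleton]
      at hden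
    calc S.growth ^ H.scale (p.hits + 1) * S.word (p.word ++ H.hit p.hits p.word ++ [a]) 1 1 ^ 2
        ≤ S.growth ^ H.scale (p.hits + 1) *
            (S.growth ^ (H.len p.hits + 1) * S.word p.word 1 1) ^ 2 := by gcongr
      _ = S.growth ^ (H.scale (p.hits + 1) + 2 * H.len p.hits + 2) * S.word p.word 1 1 ^ 2 := by
          ring
      _ ≤ S.growth ^ (H.scale (p.hits + 1) + 2 * H.len p.hits + 2) * H.freq p.hits := by
          gcongr
          exact (Nat.le_mul_of_pos_left _ (pow_pos hgrowth _)).trans hp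
      _ ≤ H.freq (p.hits + 1) := H.mul_freq_le p.hits
  · rw [force_of_not_isDue hdue]
    have hden := den_word_append_le p.word [a]
    rw [List.length_singleton, pow_one] at hden
    calc S.growth ^ H.scale p.hits * S.word (p.word ++ [a]) 1 1 ^ 2
        ≤ S.growth ^ H.scale p.hits * (S.growth * S.word p.word 1 1) ^ 2 := by gcongr
      _ = S.growth ^ (H.scale p.hits + 2) * S.word p.word 1 1 ^ 2 := by ring
      _ ≤ H.freq p.hits := (not_le.1 hdue).le

theorem IsPaced.force (hp : H.IsPaced k p) (hearly : H.IsEarly p) : H.IsPaced k (H.force p) := by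
  by_cases hdue : H.IsDue p
  · rw [force_of_isDue hdue]
    refine ⟨?_, ?_⟩
    · rw [List.length_append, H.length_hit hearly hdue, hp.length_eq, forcedLen_succ, add_assoc]
    · have hpow : S.growth ^ (H.scale p.hits + 2 + 2 * H.lag * H.forcedLen (p.hits + 1) +
          2 * H.forcedLen p.hits) ≤
          S.growth ^ (H.scale p.hits + 2 + 2 * (k + H.forcedLen p.hits)) := calc
        _ ≤ H.freq p.hits := H.le_freq p.hits
        _ ≤ S.growth ^ (H.scale p.hits + 2) * S.word p.word 1 1 ^ 2 := hdue
        _ ≤ S.growth ^ (H.scale p.hits + 2) * (S.growth ^ p.word.length) ^ 2 := by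
            gcongr
            exact MoebiusSystem.den_word_le p.word
        _ = _ := by rw [hp.length_eq]; ring
      rw [Nat.pow_le_pow_iff_right (by linarith [S.four_le_growth])] at hpow
      linarith
  · rwa [force_of_not_isDue hdue]

theorem isEarly_stage : H.IsEarly (H.stage ω k) := by
  induction k with
  | zero =>
    unfold IsEarly
    rw [stage, MoebiusSystem.word_nil, Matrix.one_apply_eq, one_pow, mul_one]
    refine le_trans (Nat.pow_le_pow_right (by linarith [S.four_le_growth]) ?_) (H.le_freq 0)
    lia
  | succ k ih => exact ih.snoc_force (ω k)

theorem isPaced_stage : H.IsPaced k (H.stage ω k) := by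
  induction k with
  | zero => exact ⟨by simp [stage, forcedLen], by simp [stage, forcedLen]⟩
  | succ k ih =>
    have h := ih.force (isEarly_stage ω)
    refine ⟨?_, h.lag_mul_le.trans k.le_succ⟩
    rw [stage, List.length_append, h.length_eq, List.length_singleton]
    ring

theorem exists_word_stage_succ_eq (k : ℕ) :
    ∃ l, (H.stage ω (k + 1)).word = (H.stage ω k).word ++ l := by
  by_cases hdue : H.IsDue (H.stage ω k)
  · exact ⟨H.hit _ _ ++ [ω k], by rw [stage, force_of_isDue hdue, List.append_assoc]⟩
  · exact ⟨[ω k], by rw [stage, force_of_not_isDue hdue]⟩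

theorem lt_den_stage (k : ℕ) : k < S.word (H.stage ω k).word 1 1 := calc
  k < 2 ^ k := Nat.lt_two_pow_self
  _ ≤ S.minDen ^ (H.stage ω k).word.length := by
      rw [(isPaced_stage ω).length_eq]
      exact (Nat.pow_le_pow_left S.two_le_minDen k).trans
        (Nat.pow_le_pow_right (by linarith [S.two_le_minDen]) (Nat.le_add_right _ _))
  _ ≤ S.word (H.stage ω k).word 1 1 := MoebiusSystem.le_den_word _

theorem exists_isDue_stage_of_hits_eq {i k : ℕ} (hk : (H.stage ω k).hits = i) :
    ∃ m, (H.stage ω m).hits = i ∧ H.IsDue (H.stage ω m) := by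
  by_contra! hnot
  have hits_eq (m : ℕ) : (H.stage ω (k + m)).hits = i := by
    induction m with
    | zero => exact hk
    | succ m ih => rw [← add_assoc, stage, force_of_not_isDue (hnot _ ih), ih]
  refine hnot _ (hits_eq (H.freq i)) ?_
  have hden := lt_den_stage (H := H) ω (k + H.freq i)
  have : 0 < S.growth := by linarith [S.four_le_growth]
  rw [IsDue, hits_eq]
  exact le_trans (by nlinarith) (Nat.le_mul_of_pos_left _ (pow_pos this _))

theorem exists_isDue_stage (i : ℕ) : ∃ k, (H.stage ω k).hits = i ∧ H.IsDue (H.stage ω k) := by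
  induction i with
  | zero => exact exists_isDue_stage_of_hits_eq ω (k := 0) rfl
  | succ i ih =>
    obtain ⟨k, hk, hdue⟩ := ih
    exact exists_isDue_stage_of_hits_eq ω (k := k + 1) (by rw [stage, force_of_isDue hdue, hk])

variable {ω ω'} in
theorem stage_congr (h : ∀ j < k, ω j = ω' j) : H.stage ω k = H.stage ω' k := by
  induction k with
  | zero => rfl
  | succ k ih => rw [stage, stage, ih fun j hj ↦ h j (by lia), h k k.lt_succ_self]

variable (H)

theorem exists_forall_mem_image_stage :
    ∃ x, ∀ k, x ∈ moebius (S.word (H.stage ω k).word) '' I := by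
  have hcompact (k : ℕ) : IsCompact (moebius (S.word (H.stage ω k).word) '' I) :=
    isCompact_Icc.image_of_continuousOn (MoebiusSystem.isAdmissible_word _).continuousOn_moebius
  have hanti (k : ℕ) : moebius (S.word (H.stage ω (k + 1)).word) '' I ⊆
      moebius (S.word (H.stage ω k).word) '' I := by
    rintro _ ⟨y, hy, rfl⟩
    obtain ⟨l, hl⟩ := exists_word_stage_succ_eq (H := H) ω k
    rw [hl, MoebiusSystem.word_append,
      MoebiusSystem.moebius_mul_word (MoebiusSystem.isAdmissible_word _) l hy.1]
    exact mem_image_of_mem _ (MoebiusSystem.mapsTo_moebius_word l hy)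
  obtain ⟨x, hx⟩ := IsCompact.nonempty_iInter_of_sequence_nonempty_isCompact_isClosed
    (fun k ↦ moebius (S.word (H.stage ω k).word) '' I) hanti
    (fun _ ↦ (nonempty_Icc.2 zero_le_one).image _) (hcompact 0) fun k ↦ (hcompact k).isClosed
  exact ⟨x, mem_iInter.1 hx⟩

/-- The limit point of the Cantor construction with free letters `ω`. -/
noncomputable def point : ℝ := (exists_forall_mem_image_stage H ω).choose

variable {H}

theorem exists_moebius_stage_eq_point (k : ℕ) :
    ∃ y ∈ I, moebius (S.word (H.stage ω k).word) y = H.point ω :=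
  (exists_forall_mem_image_stage H ω).choose_spec k

theorem exists_moebius_force_eq_point (k : ℕ) : ∃ y ∈ I,
    moebius (S.word (H.force (H.stage ω k)).word) (moebius (S.gen (ω k)) y) = H.point ω := by
  obtain ⟨y, hy, hyk⟩ := exists_moebius_stage_eq_point (H := H) ω (k + 1)
  refine ⟨y, hy, ?_⟩
  rw [← hyk, stage, MoebiusSystem.word_append, MoebiusSystem.word_cons, MoebiusSystem.word_nil,
    mul_one, (MoebiusSystem.isAdmissible_word _).moebius_mul (S.isGenerator _).toIsAdmissible hy.1]

theorem point_mem_Bad : H.point ω ∈ Bad :=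
  MoebiusSystem.mem_Bad fun N ↦
    let ⟨y, hy, hyN⟩ := exists_moebius_stage_eq_point ω N
    ⟨(H.stage ω N).word, lt_den_stage ω N, y, hy, hyN.symm⟩

theorem dni_freq_mul_point_le (i : ℕ) : dni (H.freq i * H.point ω - H.target) ≤ H.err i := by
  obtain ⟨k, rfl, hdue⟩ := exists_isDue_stage (H := H) ω i
  obtain ⟨y, hy, hyk⟩ := exists_moebius_force_eq_point (H := H) ω k
  rw [force_of_isDue hdue] at hyk
  rw [← hyk]
  exact H.dni_hit_le (isEarly_stage ω) hdue ((S.isGenerator _).mapsTo_moebius hy)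

variable {ω ω'} in
theorem exists_gap_div_le_abs_point_sub {k : ℕ} (hlt : ∀ j < k, ω j = ω' j) (hne : ω k ≠ ω' k) :
    ∃ F : ℕ, H.lag * F ≤ k ∧
      S.gap / (4 * (S.growth : ℝ) ^ (2 * (k + F))) ≤ |H.point ω - H.point ω'| := by
  obtain ⟨x, hx, hxk⟩ := exists_moebius_force_eq_point (H := H) ω k
  obtain ⟨y, hy, hyk⟩ := exists_moebius_force_eq_point (H := H) ω' k
  rw [← stage_congr hlt] at hyk
  have hpaced := (isPaced_stage (H := H) ω).force (isEarly_stage (k := k) ω)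
  set l := (H.force (H.stage ω k)).word
  refine ⟨_, hpaced.lag_mul_le, ?_⟩
  have hden : (S.word l 1 1 : ℝ) ≤ (S.growth : ℝ) ^ l.length := by
    exact_mod_cast MoebiusSystem.den_word_le l
  have hl : IsAdmissible (S.word l) := MoebiusSystem.isAdmissible_word l
  have := hl.one_le_den
  rw [← hxk, ← hyk]
  calc S.gap / (4 * (S.growth : ℝ) ^ (2 * (k + _)))
      = S.gap / (2 * (S.growth : ℝ) ^ l.length) ^ 2 := by rw [hpaced.length_eq]; ring
    _ ≤ |moebius (S.gen (ω k)) x - moebius (S.gen (ω' k)) y| / (2 * S.word l 1 1) ^ 2 := by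
        gcongr
        exact S.gap_le _ _ hne x hx y hy
    _ ≤ _ := hl.div_sq_le_abs_moebius_sub ((S.isGenerator _).mapsTo_moebius hx)
        ((S.isGenerator _).mapsTo_moebius hy)

theorem dist_ofDigits_le {s : ℝ} (hs : 0 < s) (hlag : 0 < H.lag)
    (hcard : (S.growth : ℝ) ^ (2 * (1 + 1 / H.lag) * s) ≤ S.card) :
    dist (ofDigits ω) (ofDigits ω') ≤ (4 / S.gap) ^ s * dist (H.point ω) (H.point ω') ^ s := by
  have hgap := S.gap_pos
  have hgrowth := S.one_le_growth
  obtain rfl | hne := eq_or_ne ω ω'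
  · rw [dist_self]
    positivity
  set k := PiNat.firstDiff ω ω'
  have hlt (j) (hj : j < k) : ω j = ω' j := PiNat.apply_eq_of_lt_firstDiff hj
  obtain ⟨F, hF, hsep⟩ :=
    exists_gap_div_le_abs_point_sub (H := H) hlt (PiNat.apply_firstDiff_ne hne)
  have hlag' : (0 : ℝ) < H.lag := by exact_mod_cast hlag
  have hF' : (F : ℝ) ≤ 1 / H.lag * k := by
    rw [one_div, inv_mul_eq_div, le_div_iff₀' hlag']
    exact_mod_cast hF
  have hexp : ((2 * (k + F) : ℕ) : ℝ) * s ≤ 2 * (1 + 1 / H.lag) * s * k := by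
    push_cast
    nlinarith
  have hpow : ((S.growth : ℝ) ^ (2 * (k + F))) ^ s ≤ (S.card : ℝ) ^ k := calc
    ((S.growth : ℝ) ^ (2 * (k + F))) ^ s = (S.growth : ℝ) ^ (((2 * (k + F) : ℕ) : ℝ) * s) := by
        rw [← rpow_natCast_mul (by positivity)]
    _ ≤ (S.growth : ℝ) ^ (2 * (1 + 1 / H.lag) * s * k) := rpow_le_rpow_of_exponent_le hgrowth hexp
    _ = ((S.growth : ℝ) ^ (2 * (1 + 1 / H.lag) * s)) ^ k := rpow_mul_natCast (by positivity) _ _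
    _ ≤ (S.card : ℝ) ^ k := by gcongr
  rw [← mul_rpow (by positivity) dist_nonneg]
  calc dist (ofDigits ω) (ofDigits ω') ≤ ((S.card : ℝ) ^ k)⁻¹ := abs_ofDigits_sub_ofDigits_le hlt
    _ ≤ (((S.growth : ℝ) ^ (2 * (k + F))) ^ s)⁻¹ := by gcongr
    _ = (4 / S.gap * (S.gap / (4 * (S.growth : ℝ) ^ (2 * (k + F))))) ^ s := by
        rw [← inv_rpow (by positivity)]
        congr 1
        field_simp
    _ ≤ _ := by
        gcongr
        exact hsep

end HittingScheme

theorem dimH_range_le_of_edist_le {ι E E' : Type*} [EMetricSpace E] [EMetricSpace E'] {X : ι → E}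
    {Y : ι → E'} {C s : NNReal} (hs : 0 < s)
    (h : ∀ i j, edist (Y i) (Y j) ≤ C * edist (X i) (X j) ^ (s : ℝ)) :
    dimH (range Y) ≤ dimH (range X) / s := by
  obtain _ | ⟨⟨i₀⟩⟩ := isEmpty_or_nonempty ι
  · simp only [range_eq_empty, dimH_empty, zero_le]
  have hfactors : Function.FactorsThrough Y X := fun i j hij ↦ by
    have := h i j
    rwa [hij, edist_self, ENNReal.zero_rpow_of_pos (by exact_mod_cast hs), mul_zero,
      nonpos_iff_eq_zero, edist_eq_zero] at this
  have hextend (i : ι) : Function.extend X Y (fun _ ↦ Y i₀) (X i) = Y i :=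
    hfactors.extend_apply _ i
  have hholder : HolderOnWith C s (Function.extend X Y fun _ ↦ Y i₀) (range X) := by
    rintro _ ⟨i, rfl⟩ _ ⟨j, rfl⟩
    rw [hextend, hextend]
    exact h i j
  have hrange : range Y = Function.extend X Y (fun _ ↦ Y i₀) '' range X := by
    rw [← range_comp]
    exact congrArg range (funext fun i ↦ (hextend i).symm)
  exact hrange ▸ hholder.dimH_image_le hs

theorem one_le_dimH_range_ofDigits {b : ℕ} (hb : 2 ≤ b) :
    1 ≤ dimH (range (ofDigits : (ℕ → Fin b) → ℝ)) := by
  have hI : dimH I = 1 := by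
    have := Real.dimH_of_nonempty_interior (s := I) (by simp [unitInterval])
    simpa only [Module.finrank_self, Nat.cast_one] using this
  rw [← hI]
  refine dimH_mono fun x hx ↦ ?_
  obtain ⟨ω, -, h⟩ := ofDigits_SurjOn hb hx
  exact ⟨ω, h⟩

theorem HittingScheme.ofReal_le_dimH_range_point {S : MoebiusSystem} (H : HittingScheme S) {s : ℝ}
    (hs : 0 < s) (hlag : 0 < H.lag)
    (hcard : (S.growth : ℝ) ^ (2 * (1 + 1 / H.lag) * s) ≤ S.card) :
    ENNReal.ofReal s ≤ dimH (range H.point) := by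
  have hgap := S.gap_pos
  have h := (one_le_dimH_range_ofDigits S.two_le_card).trans
    (dimH_range_le_of_edist_le (X := H.point) (C := ((4 / S.gap) ^ s).toNNReal)
      (toNNReal_pos.2 hs) fun ω ω' ↦ ?_)
  · rwa [ENNReal.le_div_iff_mul_le (.inl (by simpa using hs)) (.inl ENNReal.coe_ne_top),
      one_mul] at h
  · rw [edist_dist, edist_dist, coe_toNNReal _ hs.le,
      ENNReal.ofReal_rpow_of_nonneg dist_nonneg hs.le]
    exact (ENNReal.ofReal_le_ofReal (dist_ofDigits_le ω ω' hs hlag hcard)).trans_eq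
      (ENNReal.ofReal_mul (by positivity))

/-! ### Counting solutions -/

theorem le_ncard_of_strictMono {P : ℕ → Prop} {n : ℕ → ℕ} (hn : StrictMono n)
    (hpos : ∀ i, 1 ≤ n i) (hP : ∀ i, P (n i)) {m N : ℕ} (hN : ∀ i < m, n i ≤ N) :
    m ≤ {k | 1 ≤ k ∧ k ≤ N ∧ P k}.ncard := by
  have hfin : {k | 1 ≤ k ∧ k ≤ N ∧ P k}.Finite := (finite_Iic N).subset fun k hk ↦ hk.2.1
  calc m = (n '' Iio m).ncard := by
        rw [ncard_image_of_injective _ hn.injective, ← Finset.coe_Iio, ncard_coe_finset,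
          Nat.card_Iio]
    _ ≤ _ := by
        refine ncard_le_ncard ?_ hfin
        rintro _ ⟨i, hi, rfl⟩
        exact ⟨hpos i, hN i hi, hP i⟩

theorem exists_mul_log_log_le_ncard {P : ℕ → Prop} {n : ℕ → ℕ} (hn : StrictMono n)
    (hpos : ∀ i, 1 ≤ n i) (hP : ∀ i, P (n i)) {a e : ℝ} (he : 0 < e)
    (hlog : ∀ i, log (n i) ≤ exp (a + e * i)) :
    ∃ c : ℝ, 0 < c ∧ ∃ N₀ : ℕ, ∀ N : ℕ, N₀ ≤ N →
      c * log (log N) ≤ {k | 1 ≤ k ∧ k ≤ N ∧ P k}.ncard := by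
  have htendsto : Tendsto (fun N : ℕ ↦ log (log N)) atTop atTop :=
    tendsto_log_atTop.comp (tendsto_log_atTop.comp tendsto_natCast_atTop_atTop)
  obtain ⟨N₀, hN₀⟩ := eventually_atTop.1
    ((htendsto.eventually_ge_atTop (2 * (a + e))).and (eventually_gt_atTop 1))
  refine ⟨1 / (2 * e), by positivity, N₀, fun N hN ↦ ?_⟩
  obtain ⟨hlarge, hN1⟩ := hN₀ N hN
  have hlogN : 0 < log N := log_pos (by exact_mod_cast hN1)
  have hle (i) (hi : i < ⌊(log (log N) - a) / e⌋₊) : n i ≤ N := by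
    have hi' := Nat.lt_of_lt_floor hi
    rw [lt_div_iff₀ he] at hi'
    have : log (n i) ≤ log N := by
      rw [← exp_log hlogN]
      exact (hlog i).trans (exp_le_exp.2 (by linarith))
    exact_mod_cast (log_le_log_iff (by exact_mod_cast hpos i) (by positivity)).1 this
  calc 1 / (2 * e) * log (log N)
      ≤ 1 / (2 * e) * (2 * (log (log N) - a) - 2 * e) := by gcongr; linarith
    _ = (log (log N) - a) / e - 1 := by field_simp
    _ ≤ ⌊(log (log N) - a) / e⌋₊ := (Nat.sub_one_lt_floor _).le
    _ ≤ _ := by exact_mod_cast le_ncard_of_strictMono hn hpos hP hle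

/-! ### Doubly exponential sequences -/

theorem le_two_pow_two_pow_of_log_le {n m : ℕ} (hn : log n ≤ 2 ^ m) : n ≤ 2 ^ 2 ^ (m + 1) := by
  obtain rfl | hpos := n.eq_zero_or_pos
  · exact Nat.zero_le _
  have hlog : log n ≤ log ((2 : ℝ) ^ 2 ^ (m + 1)) := by
    rw [log_pow, Nat.cast_pow, pow_succ, Nat.cast_ofNat]
    nlinarith [log_two_gt_d9, pow_pos (two_pos : (0 : ℝ) < 2) m]
  exact_mod_cast (log_le_log_iff (by exact_mod_cast hpos) (by positivity)).1 hlog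

theorem pow_le_two_pow_mul (b k : ℕ) : b ^ k ≤ 2 ^ (b * k) := by
  rw [pow_mul]
  exact Nat.pow_le_pow_left Nat.lt_two_pow_self.le k

theorem eventually_mul_sq_le_two_pow (B : ℕ) : ∀ᶠ m : ℕ in atTop, B * (m + 2) ^ 2 ≤ 2 ^ m := by
  have htendsto := (tendsto_add_atTop_iff_nat 2).2
    (tendsto_pow_const_div_const_pow_of_one_lt 2 (one_lt_two : (1 : ℝ) < 2))
  filter_upwards [htendsto.eventually_le_const (by positivity : (0 : ℝ) < 1 / (4 * (B + 1)))]
    with m hm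
  rw [div_le_div_iff₀ (by positivity) (by positivity), pow_add 2 m] at hm
  push_cast at hm
  have : (B : ℝ) * (m + 2) ^ 2 ≤ 2 ^ m := by nlinarith [sq_nonneg ((m : ℝ) + 2)]
  exact_mod_cast this

theorem two_le_of_two_pow_two_pow_le {ν : ℕ → ℕ} (hlow : ∀ k, 2 ^ 2 ^ k ≤ ν k) (k : ℕ) : 2 ≤ ν k :=
  (Nat.le_self_pow (by positivity) 2).trans (hlow k)

theorem pow_le_of_two_pow_two_pow_le {ν : ℕ → ℕ} (hlow : ∀ k, 2 ^ 2 ^ k ≤ ν k)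
    {b k m e : ℕ} (hk : b * k ≤ 2 ^ m) (he : 0 < e) :
    b ^ k ≤ ν (e * m) := calc
  b ^ k ≤ 2 ^ (b * k) := pow_le_two_pow_mul b k
  _ ≤ 2 ^ 2 ^ (e * m) := by
    gcongr
    · exact one_le_two
    · exact hk.trans (Nat.pow_le_pow_right two_pos (Nat.le_mul_of_pos_left m he))
  _ ≤ ν (e * m) := hlow _

theorem pow_mul_le_of_two_pow_two_pow_le {ν : ℕ → ℕ} (hlow : ∀ k, 2 ^ 2 ^ k ≤ ν k)
    {c b k m : ℕ} (hlog : ∀ k, log (ν k) ≤ 2 ^ (c + k))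
    (hk : b * k ≤ 2 ^ m) : b ^ k * ν ((c + 3) * m) ≤ ν ((c + 3) * (m + 1)) := calc
  b ^ k * ν ((c + 3) * m) ≤ 2 ^ 2 ^ m * 2 ^ 2 ^ (c + (c + 3) * m + 1) :=
    Nat.mul_le_mul ((pow_le_two_pow_mul b k).trans (Nat.pow_le_pow_right two_pos hk))
      (le_two_pow_two_pow_of_log_le (hlog _))
  _ ≤ 2 ^ 2 ^ (c + (c + 3) * m + 1) * 2 ^ 2 ^ (c + (c + 3) * m + 1) := by
    gcongr <;> first | exact one_le_two | nlinarith
  _ = 2 ^ 2 ^ (c + (c + 3) * m + 2) := by rw [← pow_add, ← mul_two, ← pow_succ]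
  _ ≤ 2 ^ 2 ^ ((c + 3) * (m + 1)) := by
    gcongr <;> first | exact one_le_two | nlinarith
  _ ≤ ν ((c + 3) * (m + 1)) := hlow _

theorem sum_range_mul_add_le {i j m e : ℕ} (hm : m ≤ i + 1) :
    ∑ k ∈ Finset.range m, 68 * (e * (k + j + 1)) ≤ 68 * e * (i + j + 1) ^ 2 := calc
  ∑ k ∈ Finset.range m, 68 * (e * (k + j + 1))
      ≤ ∑ _k ∈ Finset.range m, 68 * (e * (i + j + 1)) := by
        refine Finset.sum_le_sum fun k hk ↦ ?_
        have := Finset.mem_range.1 hk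
        gcongr
        lia
  _ = m * (68 * (e * (i + j + 1))) := by
    rw [Finset.sum_const, Finset.card_range, smul_eq_mul]
  _ ≤ (i + j + 1) * (68 * (e * (i + j + 1))) := by
    gcongr
    lia
  _ = 68 * e * (i + j + 1) ^ 2 := by ring

theorem exists_forall_mul_le_two_pow (b L e J : ℕ) : ∃ j, J ≤ j ∧ ∀ i,
    b * (56 * (e * (i + 1 + j + 1)) + 2 * (68 * (e * (i + j + 1))) + 2) ≤ 2 ^ (i + j) ∧
    b * (56 * (e * (i + j + 1)) + 2 +
      2 * L * ∑ k ∈ Finset.range (i + 1), 68 * (e * (k + j + 1)) +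
      2 * ∑ k ∈ Finset.range i, 68 * (e * (k + j + 1))) ≤ 2 ^ (i + j) := by
  obtain ⟨j₀, hj₀⟩ := eventually_atTop.1
    (eventually_mul_sq_le_two_pow (b * (e * (330 + 136 * L) + 2)))
  refine ⟨max J j₀, le_max_left J j₀, fun i ↦ ?_⟩
  have hj : j₀ ≤ max J j₀ := le_max_right J j₀
  generalize max J j₀ = j at hj ⊢
  have hle := hj₀ (i + j) (by lia)
  rw [mul_assoc] at hle
  refine ⟨le_trans (Nat.mul_le_mul_left b ?_) hle, le_trans (Nat.mul_le_mul_left b ?_) hle⟩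
  · nlinarith only [Nat.zero_le (e * (i + j)), Nat.zero_le (e * (i + j) ^ 2),
      Nat.zero_le (e * L * (i + j + 2) ^ 2), Nat.zero_le (i + j), Nat.zero_le ((i + j) ^ 2)]
  · have hsum := sum_range_mul_add_le (e := e) (j := j) (le_refl (i + 1))
    have hsum' := sum_range_mul_add_le (e := e) (j := j) (Nat.le_succ i)
    have hlag := Nat.mul_le_mul_left (2 * L) hsum
    generalize ∑ k ∈ Finset.range (i + 1), 68 * (e * (k + j + 1)) = F at hlag ⊢
    generalize ∑ k ∈ Finset.range i, 68 * (e * (k + j + 1)) = F' at hsum' ⊢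
    nlinarith only [hlag, hsum', Nat.zero_le (e * (i + j)), Nat.zero_le (e * (i + j) ^ 2),
      Nat.zero_le (e * L), Nat.zero_le (e * L * (i + j)), Nat.zero_le (i + j),
      Nat.zero_le ((i + j) ^ 2)]

/-! ### The theorem -/

theorem MoebiusSystem.IsRich.exists_hittingScheme {S : MoebiusSystem} (hS : S.IsRich) {ν : ℕ → ℕ}
    {c : ℕ} (hlow : ∀ k, 2 ^ 2 ^ k ≤ ν k) (hlog : ∀ k, log (ν k) ≤ 2 ^ (c + k)) (δ : ℝ) (L : ℕ) :
    ∃ (j : ℕ) (H : HittingScheme S), H.lag = L ∧ H.target = δ ∧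
      (∀ i, H.freq i = ν ((c + 3) * (i + j))) ∧
      ∀ i, H.err i = 1 / 2 ^ ((c + 3) * (i + j + 1)) := by
  obtain ⟨J, hJ⟩ := hS.exists_forall_dni_le
  set e := c + 3 with he
  obtain ⟨j, hJj, hj⟩ := exists_forall_mul_le_two_pow S.growth L e J
  have hhit (i : ℕ) (l : List (Fin S.card))
      (hl : S.growth ^ (56 * (e * (i + j + 1))) * S.word l 1 1 ^ 2 ≤ ν (e * (i + j)))
      (hu : ν (e * (i + j)) ≤ S.growth ^ (56 * (e * (i + j + 1)) + 2) * S.word l 1 1 ^ 2) :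
      ∃ w : List (Fin S.card), w.length = 68 * (e * (i + j + 1)) ∧ ∀ x ∈ I,
        dni (ν (e * (i + j)) * moebius (S.word (l ++ w)) x - δ) ≤ 1 / 2 ^ (e * (i + j + 1)) := by
    simp only [MoebiusSystem.word_append]
    exact_mod_cast hJ (e * (i + j + 1)) (by nlinarith) _ (isAdmissible_word l) _
      (by exact_mod_cast hl) (by exact_mod_cast hu) δ
  choose! hit hlen hdni using hhit
  exact ⟨j, {
    freq i := ν (e * (i + j))
    scale i := 56 * (e * (i + j + 1))
    len i := 68 * (e * (i + j + 1))
    err i := 1 / 2 ^ (e * (i + j + 1))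
    target := δ
    lag := L
    hit := hit
    length_hit := fun {i l} hl hu ↦ hlen i l (by exact_mod_cast hl) (by exact_mod_cast hu)
    dni_hit_le := fun {i l} hl hu x hx ↦
      hdni i l (by exact_mod_cast hl) (by exact_mod_cast hu) x hx
    mul_freq_le := fun i ↦ by
      rw [Nat.add_right_comm i 1 j]
      exact pow_mul_le_of_two_pow_two_pow_le hlow hlog
        (by simpa only [Nat.add_right_comm i 1 j] using (hj i).1)
    le_freq := fun i ↦ pow_le_of_two_pow_two_pow_le hlow (hj i).2 (by lia) },
    rfl, rfl, fun _ ↦ rfl, fun _ ↦ rfl⟩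

theorem mul_le_one_div_log {k m n : ℕ} {x y : ℝ} (hn : 2 ≤ n) (hlog : log n ≤ 2 ^ k)
    (hkm : k + 3 ≤ m) (hy₀ : 0 ≤ y) (hx : x ≤ 5) (hy : y ≤ 1 / 2 ^ m) : x * y ≤ 1 / log n := by
  have hpos : 0 < log n := log_pos (by exact_mod_cast hn)
  calc x * y ≤ 5 * (1 / 2 ^ m) := mul_le_mul hx hy hy₀ (by norm_num)
    _ ≤ 1 / 2 ^ k := by
        rw [mul_one_div, div_le_div_iff₀ (by positivity) (by positivity), one_mul]
        calc 5 * 2 ^ k ≤ 2 ^ 3 * (2 : ℝ) ^ k := by gcongr; norm_num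
          _ = 2 ^ (k + 3) := by ring
          _ ≤ 2 ^ m := by gcongr; exact one_le_two
    _ ≤ 1 / log n := by gcongr

/-- The set `𝒢(α, γ, δ)`: the badly approximable `β` for which the inequality
`n * ‖nα - γ‖ * ‖nβ - δ‖ ≤ 1 / log n` has at least `c * log log N` solutions up to `N`. -/
def goodSet (α γ δ : ℝ) : Set ℝ :=
  {β ∈ Bad | ∃ c : ℝ, 0 < c ∧ ∃ N₀ : ℕ, ∀ N : ℕ, N₀ ≤ N →
    c * log (log N) ≤ ({n : ℕ | 1 ≤ n ∧ n ≤ N ∧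
      (n : ℝ) * dni (n * α - γ) * dni (n * β - δ) ≤ 1 / log n} : Set ℕ).ncard}

theorem HittingScheme.range_point_subset_goodSet {S : MoebiusSystem} (H : HittingScheme S)
    {α γ : ℝ} {ν : ℕ → ℕ} {c j : ℕ} (hlow : ∀ k, 2 ^ 2 ^ k ≤ ν k)
    (hlog : ∀ k, log (ν k) ≤ 2 ^ (c + k)) (hν : ∀ k, ν k * dni (ν k * α - γ) ≤ 5)
    (hfreq : ∀ i, H.freq i = ν ((c + 3) * (i + j)))
    (herr : ∀ i, H.err i = 1 / 2 ^ ((c + 3) * (i + j + 1))) :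
    range H.point ⊆ goodSet α γ H.target := by
  rintro _ ⟨ω, rfl⟩
  have htwo (i) : 2 ≤ H.freq i := hfreq i ▸ two_le_of_two_pow_two_pow_le hlow _
  have hlog' (i) : log (H.freq i) ≤ 2 ^ (c + (c + 3) * (i + j)) := hfreq i ▸ hlog _
  have hmono : StrictMono H.freq := strictMono_nat_of_lt_succ fun i ↦ by
    have hone := Nat.one_lt_pow (n := H.scale (i + 1) + 2 * H.len i + 2) (by lia)
      (by have := S.four_le_growth; lia : 1 < S.growth)
    exact (lt_mul_of_one_lt_left (by have := htwo i; lia) hone).trans_le (H.mul_freq_le i)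
  refine ⟨H.point_mem_Bad ω, exists_mul_log_log_le_ncard hmono
    (fun i ↦ one_le_two.trans (htwo i)) (fun i ↦ ?_) (a := c + (c + 3) * j) (e := c + 3)
    (by positivity) fun i ↦ ?_⟩
  · refine mul_le_one_div_log (htwo i) (hlog' i) ?_ (dni_nonneg _) (hfreq i ▸ hν _)
      (herr i ▸ H.dni_freq_mul_point_le ω i)
    rw [mul_add (c + 3) (i + j) 1]
    lia
  · calc log (H.freq i) ≤ 2 ^ (c + (c + 3) * (i + j)) := hlog' i
      _ ≤ exp 1 ^ (c + (c + 3) * (i + j)) := by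
          gcongr
          linarith [exp_one_gt_d9]
      _ = exp (c + (c + 3) * j + (c + 3) * i) := by
          rw [← exp_nat_mul]
          push_cast
          ring_nf

theorem ofReal_le_dimH_goodSet {α : ℝ} (hα : α ∈ KSet) (γ δ : ℝ) {s : ℝ} (hs : 0 < s)
    (hs' : s < 1) : ENNReal.ofReal s ≤ dimH (goodSet α γ δ) := by
  obtain ⟨S, hS, hcard⟩ := MoebiusSystem.exists_isRich (by linarith : (1 + s) / 2 < 1)
  obtain ⟨L, hL⟩ := exists_nat_gt (2 * s / (1 - s))
  have hL₀ : (0 : ℝ) < L := (div_nonneg (by linarith) (by linarith)).trans_lt hL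
  obtain ⟨c, hc⟩ := exists_seq_mul_dni_le hα γ
  choose ν hlow hlog hν using hc
  obtain ⟨j, H, hlag, rfl, hfreq, herr⟩ := hS.exists_hittingScheme hlow hlog δ L
  have hexp : 2 * (1 + 1 / (L : ℝ)) * s ≤ 2 * ((1 + s) / 2) := by
    rw [div_lt_iff₀ (by linarith)] at hL
    have : s / L ≤ (1 - s) / 2 := (div_le_iff₀ hL₀).2 (by linarith)
    linarith [(by ring : 2 * (1 + 1 / (L : ℝ)) * s = 2 * (s + s / L))]
  calc ENNReal.ofReal s ≤ dimH (range H.point) :=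
        H.ofReal_le_dimH_range_point hs (by rw [hlag]; exact_mod_cast hL₀)
          (hlag ▸ (rpow_le_rpow_of_exponent_le S.one_le_growth hexp).trans hcard)
    _ ≤ dimH (goodSet α γ H.target) :=
        dimH_mono (H.range_point_subset_goodSet hlow hlog hν hfreq herr)

theorem dimH_goodSet {α : ℝ} (hα : α ∈ KSet) (γ δ : ℝ) : dimH (goodSet α γ δ) = 1 := by
  refine le_antisymm ((dimH_mono (subset_univ _)).trans_eq Real.dimH_univ)
    (le_of_forall_lt fun x hx ↦ ?_)
  have hx_top : x ≠ ⊤ := (hx.trans ENNReal.one_lt_top).ne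
  have hx_one : x.toReal < 1 := by
    simpa using (ENNReal.toReal_lt_toReal hx_top ENNReal.one_ne_top).2 hx
  have hx_nonneg : 0 ≤ x.toReal := ENNReal.toReal_nonneg
  have hlt : x < ENNReal.ofReal ((1 + x.toReal) / 2) :=
    (ENNReal.lt_ofReal_iff_toReal_lt hx_top).2 (by linarith)
  exact hlt.trans_le (ofReal_le_dimH_goodSet hα γ δ (by linarith) (by linarith))

theorem stmt_0 (α : ℝ) (hα : α ∈ KSet) (γ δ : ℝ) :
    ∃ G : Set ℝ, G ⊆ Bad ∧ dimH G = 1 ∧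
      ∀ β ∈ G, ∃ c : ℝ, 0 < c ∧ ∃ N₀ : ℕ, ∀ N : ℕ, N₀ ≤ N →
        c * Real.log (Real.log N) ≤
          ({n : ℕ | 1 ≤ n ∧ n ≤ N ∧
            (n : ℝ) * dni (n * α - γ) * dni (n * β - δ) ≤ 1 / Real.log n} : Set ℕ).ncard := by
  exact ⟨goodSet α γ δ, fun _ hβ ↦ hβ.1, dimH_goodSet hα γ δ, fun _ hβ ↦ hβ.2⟩
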